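/- arXiv:1504.00538 — 2 statements merged into one kernel-verified Lean document; each statement's English description precedes it below -/
import Mathlib

section
/- Let {A^k}_{k≥0} be a HOOI sequence with a block-nondegenerate limit point Ā. Then Ā is a critical point and a block-wise maximizer, and for every n, Aₙ^k(Aₙ^k)ᵀ → ĀₙĀₙᵀ in Frobenius norm as k → ∞. -/
open Matrix BigOperators Filter

def froSq {ι κ : Type*} [Fintype ι] [Fintype κ] (M : Matrix ι κ ℝ) : ℝ :=
  ∑ i, ∑ j, (M i j) ^ 2

noncomputable def fro {ι κ : Type*} [Fintype ι] [Fintype κ] (M : Matrix ι κ ℝ) : ℝ :=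
  Real.sqrt (froSq M)

noncomputable def eigList {m : ℕ} {κ : Type*} [Fintype κ] (Y : Matrix (Fin m) κ ℝ) : List ℝ :=
  ((((Finset.univ : Finset (Fin m)).val.map
      (fun j => (Matrix.isHermitian_mul_conjTranspose_self Y).eigenvalues j)).sort (· ≤ ·)).reverse)

noncomputable def sval {m : ℕ} {κ : Type*} [Fintype κ] (Y : Matrix (Fin m) κ ℝ) (i : ℕ) : ℝ :=
  Real.sqrt ((eigList Y).getD (i - 1) 0)

/-- Feasibility: every factor matrix has orthonormal columns. -/
def TFeas {N : ℕ} {I r : Fin N → ℕ}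
    (A : (n : Fin N) → Matrix (Fin (I n)) (Fin (r n)) ℝ) : Prop :=
  ∀ n, (A n)ᵀ * A n = 1

/-- `Gₙ(A) = unfoldₙ(X ×₁ A₁ᵀ ⋯ ×_{n−1} A_{n−1}ᵀ ×_{n+1} A_{n+1}ᵀ ⋯ ×_N A_Nᵀ)`. -/
noncomputable def Gmat {N : ℕ} {I r : Fin N → ℕ} (X : ((n : Fin N) → Fin (I n)) → ℝ)
    (A : (n : Fin N) → Matrix (Fin (I n)) (Fin (r n)) ℝ) (n : Fin N) :
    Matrix (Fin (I n)) ((m : {m : Fin N // m ≠ n}) → Fin (r m.1)) ℝ :=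
  fun j c => ∑ idx : ((m : {m : Fin N // m ≠ n}) → Fin (I m.1)),
    X (fun i => if h : i = n then Fin.cast (by rw [h]) j else idx ⟨i, h⟩) *
      ∏ m : {m : Fin N // m ≠ n}, A m.1 (idx m) (c m)

/-- `f(A) = ‖X ×₁ A₁ᵀ ⋯ ×_N A_Nᵀ‖_F²`. -/
noncomputable def fval {N : ℕ} {I r : Fin N → ℕ} (X : ((n : Fin N) → Fin (I n)) → ℝ)
    (A : (n : Fin N) → Matrix (Fin (I n)) (Fin (r n)) ℝ) : ℝ :=
  ∑ c : ((n : Fin N) → Fin (r n)),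
    (∑ idx : ((n : Fin N) → Fin (I n)), X idx * ∏ n, A n (idx n) (c n)) ^ 2

/-- A critical point: `Gₙ(A)Gₙ(A)ᵀAₙ = AₙAₙᵀGₙ(A)Gₙ(A)ᵀAₙ` for all `n`. -/
def Critical {N : ℕ} {I r : Fin N → ℕ} (X : ((n : Fin N) → Fin (I n)) → ℝ)
    (A : (n : Fin N) → Matrix (Fin (I n)) (Fin (r n)) ℝ) : Prop :=
  ∀ n, Gmat X A n * (Gmat X A n)ᵀ * A n =
    A n * (A n)ᵀ * (Gmat X A n * (Gmat X A n)ᵀ * A n)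

/-- A block-wise maximizer. -/
def BlockMax {N : ℕ} {I r : Fin N → ℕ} (X : ((n : Fin N) → Fin (I n)) → ℝ)
    (A : (n : Fin N) → Matrix (Fin (I n)) (Fin (r n)) ℝ) : Prop :=
  ∀ n, ∀ B : Matrix (Fin (I n)) (Fin (r n)) ℝ, Bᵀ * B = 1 →
    froSq (Bᵀ * Gmat X A n) ≤ froSq ((A n)ᵀ * Gmat X A n)

/-- Block-nondegeneracy: `σ_{rₙ}(Gₙ(A)) > σ_{rₙ+1}(Gₙ(A))` for all `n`. -/
def NonDeg {N : ℕ} {I r : Fin N → ℕ} (X : ((n : Fin N) → Fin (I n)) → ℝ)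
    (A : (n : Fin N) → Matrix (Fin (I n)) (Fin (r n)) ℝ) : Prop :=
  ∀ n, sval (Gmat X A n) (r n + 1) < sval (Gmat X A n) (r n)

/-- The hybrid tuple used in HOOI: the already-updated blocks `i < n` come from
`Anew`, the rest from `Aold`. -/
def hyb {N : ℕ} {I r : Fin N → ℕ}
    (Aold Anew : (n : Fin N) → Matrix (Fin (I n)) (Fin (r n)) ℝ) (n : Fin N) :
    (i : Fin N) → Matrix (Fin (I i)) (Fin (r i)) ℝ :=
  fun i => if i < n then Anew i else Aold i

/-- `Gₙ^k = unfoldₙ(X ×₁ (A₁^{k+1})ᵀ ⋯ ×_{n−1} (A_{n−1}^{k+1})ᵀ ×_{n+1} (A_{n+1}^k)ᵀ ⋯ ×_N (A_N^k)ᵀ)`. -/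
noncomputable def Gseq {N : ℕ} {I r : Fin N → ℕ} (X : ((n : Fin N) → Fin (I n)) → ℝ)
    (A : ℕ → (n : Fin N) → Matrix (Fin (I n)) (Fin (r n)) ℝ) (k : ℕ) (n : Fin N) :
    Matrix (Fin (I n)) ((m : {m : Fin N // m ≠ n}) → Fin (r m.1)) ℝ :=
  Gmat X (hyb (A k) (A (k + 1)) n) n

/-- A HOOI sequence. -/
def IsHOOI {N : ℕ} {I r : Fin N → ℕ} (X : ((n : Fin N) → Fin (I n)) → ℝ)
    (A : ℕ → (n : Fin N) → Matrix (Fin (I n)) (Fin (r n)) ℝ) : Prop :=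
  (∀ k, TFeas (A k)) ∧
  ∀ k (n : Fin N), ∀ B : Matrix (Fin (I n)) (Fin (r n)) ℝ, Bᵀ * B = 1 →
    froSq (Bᵀ * Gseq X A k n) ≤ froSq ((A (k + 1) n)ᵀ * Gseq X A k n)

/-- A greedy HOOI sequence. -/
def IsGreedyHOOI {N : ℕ} {I r : Fin N → ℕ} (X : ((n : Fin N) → Fin (I n)) → ℝ)
    (A : ℕ → (n : Fin N) → Matrix (Fin (I n)) (Fin (r n)) ℝ) : Prop :=
  IsHOOI X A ∧
  ∀ k (n : Fin N), ∀ B : Matrix (Fin (I n)) (Fin (r n)) ℝ, Bᵀ * B = 1 →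
    (∀ C : Matrix (Fin (I n)) (Fin (r n)) ℝ, Cᵀ * C = 1 →
      froSq (Cᵀ * Gseq X A k n) ≤ froSq (Bᵀ * Gseq X A k n)) →
    fro (A (k + 1) n - A k n) ≤ fro (B - A k n)

/-- `Ā` is a limit point of the sequence `{A^k}` (blockwise in Frobenius norm). -/
def IsLimitPt {N : ℕ} {I r : Fin N → ℕ}
    (A : ℕ → (n : Fin N) → Matrix (Fin (I n)) (Fin (r n)) ℝ)
    (Abar : (n : Fin N) → Matrix (Fin (I n)) (Fin (r n)) ℝ) : Prop :=
  ∃ φ : ℕ → ℕ, StrictMono φ ∧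
    ∀ n, Tendsto (fun k => fro (A (φ k) n - Abar n)) atTop (nhds 0)

/-- `‖A − B‖_F = √(∑ₙ ‖Aₙ − Bₙ‖_F²)` on tuples. -/
noncomputable def tdist {N : ℕ} {I r : Fin N → ℕ}
    (A B : (n : Fin N) → Matrix (Fin (I n)) (Fin (r n)) ℝ) : ℝ :=
  Real.sqrt (∑ n, froSq (A n - B n))

/-- A local maximizer of `f` over the feasible set. -/
def LocalMax {N : ℕ} {I r : Fin N → ℕ} (X : ((n : Fin N) → Fin (I n)) → ℝ)
    (A : (n : Fin N) → Matrix (Fin (I n)) (Fin (r n)) ℝ) : Prop :=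
  TFeas A ∧ ∃ ε > (0 : ℝ), ∀ B : (n : Fin N) → Matrix (Fin (I n)) (Fin (r n)) ℝ,
    TFeas B → tdist B A ≤ ε → fval X B ≤ fval X A

/-- A globally optimal solution. -/
def GlobalMax {N : ℕ} {I r : Fin N → ℕ} (X : ((n : Fin N) → Fin (I n)) → ℝ)
    (A : (n : Fin N) → Matrix (Fin (I n)) (Fin (r n)) ℝ) : Prop :=
  TFeas A ∧ ∀ B : (n : Fin N) → Matrix (Fin (I n)) (Fin (r n)) ℝ,
    TFeas B → fval X B ≤ fval X A

open MvPolynomial in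
lemma chain_rule {σ : Type} [Fintype σ] {κ : Type} [Field κ] [Algebra ℝ κ]
    (y : σ → Polynomial κ) (p : MvPolynomial σ ℝ) :
    Polynomial.derivative (aeval y p) =
      ∑ j, aeval y (pderiv j p) * Polynomial.derivative (y j) := by
  classical
  induction p using MvPolynomial.induction_on with
  | C a =>
    simp [MvPolynomial.aeval_C, Polynomial.algebraMap_apply]
  | add p q hp hq => simp [hp, hq, add_mul, Finset.sum_add_distrib]
  | mul_X p i hp =>
    simp only [map_mul, aeval_X, Polynomial.derivative_mul, hp, Derivation.leibniz, smul_eq_mul,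
      map_add, pderiv_X, add_mul, Finset.sum_add_distrib]
    rw [add_comm]
    congr 1
    · rw [Finset.sum_eq_single i]
      · simp
      · intro b _ hb
        simp [Pi.single_apply, hb.symm, hb]
      · simp
    · rw [Finset.sum_mul]
      refine Finset.sum_congr rfl fun j _ => by ring

lemma formallySmooth_real (κ : Type) [Field κ] [Algebra ℝ κ] : Algebra.FormallySmooth ℝ κ := by
  obtain ⟨s, hs⟩ := exists_isTranscendenceBasis ℝ κ
  have h1 := hs.isAlgebraic_field
  have : CharZero κ := charZero_of_injective_algebraMap (algebraMap ℝ κ).injective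
  exact .of_algebraicIndependent_of_isSeparable hs.1

open IsLocalRing in
lemma core_dvr {σ : Type} [Fintype σ] (V : Type) [CommRing V] [IsDomain V]
    [IsDiscreteValuationRing V] [Algebra ℝ V] (τ : MvPolynomial σ ℝ →ₐ[ℝ] V)
    (p : MvPolynomial σ ℝ) (h0 : τ p ≠ 0) (hm : ¬ IsUnit (τ p))
    (hd : ∀ j, τ p ∣ τ (MvPolynomial.pderiv j p)) : False := by
  classical
  obtain ⟨t, ht⟩ := IsDiscreteValuationRing.exists_irreducible V
  obtain ⟨e, u, hu⟩ := IsDiscreteValuationRing.eq_unit_mul_pow_irreducible h0 ht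
  have ht0 : t ≠ 0 := ht.ne_zero
  have he : e ≠ 0 := by
    rintro rfl
    apply hm
    rw [hu]; simp
  have htm : residue V t = 0 := by
    rw [residue_eq_zero_iff, ht.maximalIdeal_eq]
    exact Ideal.mem_span_singleton_self t
  have hres : ∀ v : V, residue V v = 0 → t ∣ v := by
    intro v hv
    rw [residue_eq_zero_iff, ht.maximalIdeal_eq] at hv
    exact Ideal.mem_span_singleton.mp hv
  let J : Ideal V := Ideal.span {t ^ (e + 1)}
  let κ := ResidueField V
  have : Algebra.FormallySmooth ℝ κ := formallySmooth_real κ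
  have : CharZero κ := charZero_of_injective_algebraMap (algebraMap ℝ κ).injective
  let r : V →ₐ[ℝ] κ := IsScalarTower.toAlgHom ℝ V κ
  have hr : ∀ v, r v = residue V v := fun v => rfl
  have hJ : ∀ a : V, a ∈ J → r a = 0 := by
    intro a ha
    obtain ⟨b, rfl⟩ := Ideal.mem_span_singleton.mp ha
    rw [hr, map_mul, map_pow, htm]; simp
  let g : (V ⧸ J) →ₐ[ℝ] κ := Ideal.Quotient.liftₐ J r hJ
  have hg : ∀ v, g (Ideal.Quotient.mk J v) = residue V v := fun v => rfl
  have hgs : Function.Surjective g := by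
    intro c
    obtain ⟨v, rfl⟩ := residue_surjective c
    exact ⟨Ideal.Quotient.mk J v, rfl⟩
  have hnil : IsNilpotent (RingHom.ker (g : (V ⧸ J) →+* κ)) := by
    refine ⟨e + 1, ?_⟩
    have : RingHom.ker (g : (V ⧸ J) →+* κ) ≤ Ideal.span {Ideal.Quotient.mk J t} := by
      intro a ha
      obtain ⟨v, rfl⟩ := Ideal.Quotient.mk_surjective a
      have h1 : residue V v = 0 := ha
      obtain ⟨w, rfl⟩ := hres v h1
      rw [map_mul]
      exact Ideal.mul_mem_right _ _ (Ideal.mem_span_singleton_self _)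
    have h2 := Ideal.pow_right_mono this (e + 1)
    rw [Ideal.span_singleton_pow, ← map_pow,
      Ideal.Quotient.eq_zero_iff_mem.mpr (Ideal.mem_span_singleton_self _)] at h2
    simpa using h2
  let s : κ →ₐ[ℝ] (V ⧸ J) :=
    Algebra.FormallySmooth.liftOfSurjective (AlgHom.id ℝ κ) g hgs hnil
  have hs : ∀ c, g (s c) = c := fun c =>
    Algebra.FormallySmooth.liftOfSurjective_apply (AlgHom.id ℝ κ) g hgs hnil c
  let π : Polynomial κ →+* (V ⧸ J) :=
    Polynomial.eval₂RingHom (s : κ →+* (V ⧸ J)) (Ideal.Quotient.mk J t)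
  have hπX : π Polynomial.X = Ideal.Quotient.mk J t := by simp [π]
  have hπC : ∀ c, π (Polynomial.C c) = s c := by intro c; simp [π]
  have hgπ : ∀ q, g (π q) = q.coeff 0 := by
    intro q
    conv_lhs => rw [← Polynomial.X_mul_divX_add q]
    rw [map_add, map_mul, hπX, hπC, map_add, map_mul, hs, hg, htm]; simp
  have hπJ : π (Polynomial.X ^ (e + 1)) = 0 := by
    rw [map_pow, hπX, ← map_pow]
    exact Ideal.Quotient.eq_zero_iff_mem.mpr (Ideal.mem_span_singleton_self _)
  -- surjectivity
  have hsurj' : ∀ n : ℕ, ∀ v : V, ∃ q : Polynomial κ, ∃ w : V,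
      Ideal.Quotient.mk J v = π q + Ideal.Quotient.mk J (t ^ n * w) := by
    intro n
    induction n with
    | zero => intro v; exact ⟨0, v, by simp⟩
    | succ n ih =>
      intro v
      obtain ⟨q, w, hq⟩ := ih v
      obtain ⟨w', hw'⟩ := Ideal.Quotient.mk_surjective (s (residue V w))
      have h1 : residue V (w - w') = 0 := by
        rw [map_sub, ← hg w', hw', hs, sub_self]
      obtain ⟨x, hx⟩ := hres _ h1
      refine ⟨q + Polynomial.X ^ n * Polynomial.C (residue V w), x, ?_⟩
      have hw : w = w' + t * x := by rw [← hx]; ring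
      have h2 : π (q + Polynomial.X ^ n * Polynomial.C (residue V w)) =
          π q + Ideal.Quotient.mk J t ^ n * Ideal.Quotient.mk J w' := by
        rw [map_add, map_mul, map_pow, hπX, hπC, hw']
      rw [hq, h2, hw]
      simp only [map_mul, map_add, map_pow]
      ring
  have hsurj : ∀ v : V, ∃ q : Polynomial κ, π q = Ideal.Quotient.mk J v := by
    intro v
    obtain ⟨q, w, hq⟩ := hsurj' (e + 1) v
    refine ⟨q, ?_⟩
    rw [hq, Ideal.Quotient.eq_zero_iff_mem.mpr
      (Ideal.mul_mem_right _ _ (Ideal.mem_span_singleton_self _)), add_zero]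
  choose y hy using fun j => hsurj (τ (MvPolynomial.X j))
  have hπτ : ∀ q, π (MvPolynomial.aeval y q) = Ideal.Quotient.mk J (τ q) := by
    intro q
    induction q using MvPolynomial.induction_on with
    | C a =>
      rw [MvPolynomial.aeval_C, Polynomial.algebraMap_apply, hπC,
        AlgHom.commutes, ← MvPolynomial.algebraMap_eq, AlgHom.commutes]
      rfl
    | add p q hp hq => simp only [map_add, hp, hq]
    | mul_X p i hp => simp only [map_mul, hp, MvPolynomial.aeval_X, hy]
  have hdiv : ∀ q : Polynomial κ, ∀ a : V, π q = Ideal.Quotient.mk J (t ^ e * a) →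
      ∀ i ≤ e, Polynomial.X ^ i ∣ q := by
    intro q a hq i
    induction i with
    | zero => intro _; simp
    | succ i ih =>
      intro hi
      obtain ⟨q0, hq0⟩ := ih (by omega)
      obtain ⟨v, hv⟩ := Ideal.Quotient.mk_surjective (π q0)
      have h1 : Ideal.Quotient.mk J (t ^ i * v) = Ideal.Quotient.mk J (t ^ e * a) := by
        rw [← hq, hq0, map_mul, map_mul, hv, map_pow, map_pow, hπX]
      rw [Ideal.Quotient.eq] at h1
      obtain ⟨b, hb⟩ := Ideal.mem_span_singleton.mp h1
      obtain ⟨k, rfl⟩ : ∃ k, e = i + 1 + k := ⟨e - (i + 1), by omega⟩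
      have h2 : v = t * (t ^ k * a + t ^ (k + 1) * b) := by
        apply mul_left_cancel₀ (pow_ne_zero i ht0)
        linear_combination hb
      have h3 : q0.coeff 0 = 0 := by
        rw [← hgπ, ← hv, hg, h2, map_mul, htm, zero_mul]
      obtain ⟨q1, hq1⟩ := Polynomial.X_dvd_iff.mpr h3
      exact ⟨q1, by rw [hq0, hq1]; ring⟩
  obtain ⟨W, hW⟩ := hdiv (MvPolynomial.aeval y p) u (by rw [hπτ, hu, mul_comm]) e le_rfl
  have hW0 : ¬ Polynomial.X ∣ W := by
    rintro ⟨W', rfl⟩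
    have h1 : π (MvPolynomial.aeval y p) = 0 := by
      rw [hW, ← mul_assoc, ← pow_succ, map_mul, hπJ, zero_mul]
    rw [hπτ, Ideal.Quotient.eq_zero_iff_mem] at h1
    obtain ⟨b, hb⟩ := Ideal.mem_span_singleton.mp h1
    apply ht.not_isUnit
    have h2 : (u : V) = t * b := by
      apply mul_left_cancel₀ (pow_ne_zero e ht0)
      rw [mul_comm, ← hu, hb]; ring
    exact isUnit_of_mul_isUnit_left (h2 ▸ u.isUnit)
  have hder : Polynomial.X ^ e ∣ Polynomial.derivative (MvPolynomial.aeval y p) := by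
    rw [chain_rule]
    refine Finset.dvd_sum fun j _ => Dvd.dvd.mul_right ?_ _
    obtain ⟨c, hc⟩ := hd j
    refine hdiv _ (u * c) ?_ e le_rfl
    rw [hπτ, hc, hu]; congr 1; ring
  obtain ⟨k, rfl⟩ : ∃ k, e = k + 1 := ⟨e - 1, by omega⟩
  rw [hW, Polynomial.derivative_mul, Polynomial.derivative_X_pow] at hder
  have h5 := (Nat.cast_ne_zero (R := κ)).mpr he
  have h4 := (dvd_add_left (Dvd.intro _ rfl)).mp hder
  obtain ⟨Z, hZ⟩ := h4
  apply hW0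
  simp only [Nat.add_sub_cancel] at hZ
  have h6 : Polynomial.C ((k + 1 : ℕ) : κ) * W = Polynomial.X * Z := by
    apply mul_left_cancel₀ (pow_ne_zero k (Polynomial.X_ne_zero (R := κ)))
    rw [← mul_assoc, ← mul_assoc, ← pow_succ, ← hZ]; ring
  exact ((Polynomial.isUnit_C.mpr (isUnit_iff_ne_zero.mpr h5)).dvd_mul_left).mp ⟨Z, h6⟩



lemma exists_dvr_normal (C : Type) [CommRing C] [IsDomain C] [Algebra ℝ C] [IsNoetherianRing C]
    [IsIntegrallyClosed C] (Q : Ideal C) [hQ : Q.IsPrime] (c : C) (hc : c ∈ Q) (hc0 : c ≠ 0) :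
    ∃ (V : Type) (_ : CommRing V) (_ : IsDomain V) (_ : IsDiscreteValuationRing V)
      (_ : Algebra ℝ V) (φ : C →ₐ[ℝ] V),
      Function.Injective φ ∧ ¬ IsUnit (φ c) ∧ ∀ y, y ∉ Q → IsUnit (φ y) := by
  obtain ⟨q, hq, hqQ⟩ := Ideal.exists_minimalPrimes_le (I := Ideal.span {c}) (J := Q)
    (by rwa [Ideal.span_singleton_le_iff_mem])
  have hqp : q.IsPrime := hq.1.1
  have hpq : c ∈ q := hq.1.2 (Ideal.mem_span_singleton_self _)
  have hht := Ideal.height_le_one_of_isPrincipal_of_mem_minimalPrimes _ q hq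
  let V := Localization.AtPrime q
  have hinjV : Function.Injective (algebraMap C V) :=
    IsLocalization.injective V q.primeCompl_le_nonZeroDivisors
  have hpV : algebraMap C V c ∈ IsLocalRing.maximalIdeal V :=
    (IsLocalization.AtPrime.to_map_mem_maximal_iff V q _).mpr hpq
  have hp0V : algebraMap C V c ≠ 0 := by
    intro h
    apply hc0
    apply hinjV; simpa using h
  have hnf : ¬ IsField V := by
    rw [IsLocalRing.isField_iff_maximalIdeal_eq]
    intro h
    rw [h] at hpV
    exact hp0V hpV
  have hNV : IsNoetherianRing V := IsLocalization.isNoetherianRing q.primeCompl V inferInstance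
  have hICV : IsIntegrallyClosed V := 
    isIntegrallyClosed_of_isLocalization V q.primeCompl q.primeCompl_le_nonZeroDivisors
  have hdim : ringKrullDim V ≤ 1 := by
    rw [IsLocalization.AtPrime.ringKrullDim_eq_height q V]
    exact_mod_cast hht
  have hK : Ring.KrullDimLE 1 V := by
    rw [Ring.krullDimLE_iff]
    exact_mod_cast hdim
  have hD := Ring.krullDimLE_one_iff_of_noZeroDivisors.mp hK
  have hdvr : IsDiscreteValuationRing V := by
    have := (IsDiscreteValuationRing.TFAE V hnf).out 0 3
    refine this.mpr ⟨hICV, IsLocalRing.maximalIdeal V,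
      ⟨fun h => ?_, inferInstance⟩, ?_⟩
    · rw [h] at hpV; exact hp0V hpV
    · rintro P' ⟨hP'0, hP'⟩
      exact IsLocalRing.eq_maximalIdeal (hD P' hP'0 hP')
  refine ⟨V, inferInstance, inferInstance, hdvr, inferInstance, 
    IsScalarTower.toAlgHom ℝ C V, ?_, ?_, ?_⟩
  · exact hinjV
  · exact hpV
  · intro y hy
    refine (IsLocalization.AtPrime.isUnit_to_map_iff V q _).mpr ?_
    intro h
    exact hy (hqQ h)

lemma exists_dvr (B : Type) [CommRing B] [IsDomain B] [Algebra ℝ B] [Algebra.FiniteType ℝ B]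
    (P : Ideal B) [hP : P.IsPrime] (p : B) (hp : p ∈ P) (hp0 : p ≠ 0) :
    ∃ (V : Type) (_ : CommRing V) (_ : IsDomain V) (_ : IsDiscreteValuationRing V)
      (_ : Algebra ℝ V) (φ : B →ₐ[ℝ] V),
      Function.Injective φ ∧ ¬ IsUnit (φ p) ∧ ∀ y, y ∉ P → IsUnit (φ y) := by
  classical
  obtain ⟨s, g, ginj, gfin⟩ := exists_finite_inj_algHom_of_fg ℝ B
  let A := MvPolynomial (Fin s) ℝ
  let L := FractionRing B
  let K := FractionRing A
  letI : Algebra A B := g.toRingHom.toAlgebra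
  have : Module.Finite A B := gfin
  have : FaithfulSMul A B := (faithfulSMul_iff_algebraMap_injective A B).mpr ginj
  have : IsScalarTower ℝ A B := IsScalarTower.of_algebraMap_eq fun x => (g.commutes x).symm
  have : FaithfulSMul A L := (faithfulSMul_iff_algebraMap_injective A L).mpr (by
    rw [IsScalarTower.algebraMap_eq A B L]
    exact (IsFractionRing.injective B L).comp ginj)
  letI : Algebra K L := FractionRing.liftAlgebra A L
  have : IsScalarTower A K L := FractionRing.isScalarTower_liftAlgebra A L
  have : IsLocalization (Algebra.algebraMapSubmonoid B (nonZeroDivisors A)) L := inferInstance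
  have : FiniteDimensional K L :=
    Module.Finite.of_isLocalization A B (nonZeroDivisors A)
  have : CharZero K := charZero_of_injective_algebraMap (algebraMap ℝ K).injective
  have : Algebra.IsSeparable K L := inferInstance
  let C := integralClosure A L
  have hN : IsNoetherianRing C := integralClosure.isNoetherianRing (K := K) (L := L) (A := A)
  have hIC : IsIntegrallyClosed C := integralClosure.isIntegrallyClosedOfFiniteExtension K
  let ι : B →ₐ[A] C := (IsScalarTower.toAlgHom A B L).codRestrict C (fun b =>
    (Algebra.IsIntegral.isIntegral (R := A) b).map (IsScalarTower.toAlgHom A B L))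
  have ιinj : Function.Injective ι := by
    intro a b hab
    exact IsFractionRing.injective B L (congrArg Subtype.val hab)
  letI : Algebra B C := ι.toRingHom.toAlgebra
  have : IsScalarTower A B C := IsScalarTower.of_algebraMap_eq fun x => (ι.commutes x).symm
  have : Algebra.IsIntegral B C := Algebra.IsIntegral.tower_top A
  obtain ⟨Q, -, hQ, hQP⟩ := Ideal.exists_ideal_over_prime_of_isIntegral P (⊥ : Ideal C) (by
    intro x hx
    have : ι x = 0 := hx
    rw [← map_zero ι] at this
    rw [ιinj this]; exact P.zero_mem)
  have hpQ : ι p ∈ Q := by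
    have : p ∈ Q.comap (algebraMap B C) := by rw [hQP]; exact hp
    exact this
  have : IsScalarTower ℝ A C := inferInstance
  obtain ⟨V, i1, i2, i3, i4, φ, h1, h2, h3⟩ := exists_dvr_normal C Q (ι p) hpQ (by
    intro h
    rw [← map_zero ι] at h
    exact hp0 (ιinj h))
  refine ⟨V, i1, i2, i3, i4, φ.comp (ι.restrictScalars ℝ), h1.comp ιinj, h2, ?_⟩
  intro y hy
  apply h3
  intro h
  apply hy
  rw [← hQP]
  exact h



lemma rad_mem {σ : Type} [Fintype σ] (B : Type) [CommRing B] [IsDomain B] [Algebra ℝ B]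
    [Algebra.FiniteType ℝ B] (τ : MvPolynomial σ ℝ →ₐ[ℝ] B) (p : MvPolynomial σ ℝ)
    (hp : τ p ≠ 0) (y : B) (hy : ∀ j, τ p ∣ y * τ (MvPolynomial.pderiv j p)) :
    ∃ N : ℕ, τ p ∣ y ^ N := by
  by_contra hcon
  have hnot : y ∉ (Ideal.span {τ p}).radical := by
    rintro ⟨N, hN⟩
    exact hcon ⟨N, Ideal.mem_span_singleton.mp hN⟩
  rw [Ideal.radical_eq_sInf, Ideal.mem_sInf] at hnot
  push Not at hnot
  obtain ⟨P, ⟨hPle, hP⟩, hyP⟩ := hnot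
  obtain ⟨V, i1, i2, i3, i4, φ, h1, h2, h3⟩ := exists_dvr B P (τ p)
    (hPle (Ideal.mem_span_singleton_self _)) hp
  refine core_dvr V (φ.comp τ) p ?_ h2 ?_
  · intro h
    apply hp
    apply h1
    rw [map_zero]; exact h
  · intro j
    have h4 := map_dvd φ (hy j)
    rw [map_mul] at h4
    exact ((h3 y hyP).dvd_mul_left).mp h4

open MvPolynomial in
lemma alg_ident {σ : Type} [Fintype σ] (p d : MvPolynomial σ ℝ) (hp : p ≠ 0) (hd : d ≠ 0)
    (v : Option σ → Localization.Away (p * d)) (y : MvPolynomial (σ ⊕ Option σ) ℝ)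
    (c : σ → MvPolynomial (σ ⊕ Option σ) ℝ)
    (hc : ∀ j, aeval (Sum.elim (fun i => algebraMap (MvPolynomial σ ℝ) (Localization.Away (p * d)) (X i)) v) y *
        algebraMap (MvPolynomial σ ℝ) (Localization.Away (p * d)) (pderiv j p) = algebraMap (MvPolynomial σ ℝ) (Localization.Away (p * d)) p *
          aeval (Sum.elim (fun i => algebraMap (MvPolynomial σ ℝ) (Localization.Away (p * d)) (X i)) v) (c j)) :
    ∃ N : ℕ, ∃ b : MvPolynomial (σ ⊕ Option σ) ℝ,
      aeval (Sum.elim (fun i => algebraMap (MvPolynomial σ ℝ) (Localization.Away (p * d)) (X i)) v) y ^ N =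
        algebraMap (MvPolynomial σ ℝ) (Localization.Away (p * d)) p *
          aeval (Sum.elim (fun i => algebraMap (MvPolynomial σ ℝ) (Localization.Away (p * d)) (X i)) v) b := by
  have hpd : p * d ≠ 0 := mul_ne_zero hp hd
  have hle : Submonoid.powers (p * d) ≤ nonZeroDivisors (MvPolynomial σ ℝ) :=
    powers_le_nonZeroDivisors_of_noZeroDivisors hpd
  have hdom : IsDomain (Localization.Away (p * d)) := IsLocalization.isDomain_localization hle
  let K := Localization.Away (p * d)
  have hinj : Function.Injective (algebraMap (MvPolynomial σ ℝ) K) := IsLocalization.injective K hle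
  set θ : MvPolynomial (σ ⊕ Option σ) ℝ →ₐ[ℝ] K :=
    aeval (Sum.elim (fun i => algebraMap (MvPolynomial σ ℝ) K (X i)) v) with hθ
  have hθr : ∀ q : MvPolynomial σ ℝ, algebraMap _ K q = θ (rename Sum.inl q) := by
    intro q
    rw [hθ, aeval_rename]
    have : (IsScalarTower.toAlgHom ℝ (MvPolynomial σ ℝ) K) =
        aeval ((Sum.elim (fun i => algebraMap (MvPolynomial σ ℝ) K (X i)) v) ∘ Sum.inl) := by
      apply MvPolynomial.algHom_ext
      intro i
      simp
    exact DFunLike.congr_fun this q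
  let τ : MvPolynomial σ ℝ →ₐ[ℝ] θ.range := θ.rangeRestrict.comp (rename Sum.inl)
  have hτ : ∀ q, ((τ q : θ.range) : K) = algebraMap _ K q := fun q => (hθr q).symm
  have : Algebra.FiniteType ℝ θ.range :=
    Algebra.FiniteType.of_surjective θ.rangeRestrict θ.rangeRestrict_surjective
  obtain ⟨N, b, hb⟩ := rad_mem θ.range τ p (by
    intro h
    apply hp
    apply hinj
    rw [← hτ, h]; simp) (θ.rangeRestrict y) (by
    intro j
    refine ⟨θ.rangeRestrict (c j), ?_⟩
    apply Subtype.ext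
    simp only [MulMemClass.coe_mul, hτ]
    exact hc j)
  obtain ⟨b', rfl⟩ := θ.rangeRestrict_surjective b
  refine ⟨N, b', ?_⟩
  have h5 := congrArg Subtype.val hb
  simp only [MulMemClass.coe_mul, hτ, SubmonoidClass.coe_pow] at h5
  exact h5

open MvPolynomial in
lemma bdd_box {ι : Type} [Fintype ι] (b : MvPolynomial ι ℝ) (R : ℝ) :
    ∃ M : ℝ, 0 < M ∧ ∀ x : ι → ℝ, (∀ i, |x i| ≤ R) → |eval x b| ≤ M := by
  have hcomp : IsCompact (Set.pi Set.univ fun _ : ι => Set.Icc (-R) R) :=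
    isCompact_univ_pi fun _ => isCompact_Icc
  obtain ⟨M, hM⟩ := hcomp.exists_bound_of_continuousOn
    (f := fun x => eval x b) (MvPolynomial.continuous_eval b).continuousOn
  refine ⟨max M 1, by positivity, fun x hx => (hM x ?_).trans (le_max_left _ _)⟩
  intro i _
  exact abs_le.mp (hx i)

open MvPolynomial in
/-- evaluation at a real point on the localization -/
lemma eval_loc {σ : Type} [Fintype σ] (p d : MvPolynomial σ ℝ) (x : σ → ℝ)
    (hx : eval x p ≠ 0) (hx' : eval x d ≠ 0) :
    ∃ E : Localization.Away (p * d) →+* ℝ, (∀ q, E (algebraMap (MvPolynomial σ ℝ) _ q) = eval x q) ∧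
      ∀ (v : Option σ → Localization.Away (p * d)) (b : MvPolynomial (σ ⊕ Option σ) ℝ),
        E (aeval (Sum.elim (fun i => algebraMap (MvPolynomial σ ℝ) (Localization.Away (p * d)) (X i)) v) b) =
          eval (Sum.elim x (fun o => E (v o))) b := by
  have hu : IsUnit (eval x (p * d)) := by
    rw [map_mul]
    exact isUnit_iff_ne_zero.mpr (mul_ne_zero hx hx')
  let E : Localization.Away (p * d) →+* ℝ := IsLocalization.Away.lift (p * d) (g := eval x) hu
  have hE : ∀ q, E (algebraMap (MvPolynomial σ ℝ) _ q) = eval x q := fun q =>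
    IsLocalization.Away.lift_eq (p * d) hu q
  refine ⟨E, hE, fun v b => ?_⟩
  induction b using MvPolynomial.induction_on with
  | C a =>
    rw [aeval_C, eval_C, IsScalarTower.algebraMap_apply ℝ (MvPolynomial σ ℝ), hE,
      MvPolynomial.algebraMap_eq, eval_C]
  | add p q hp hq => simp only [map_add, hp, hq]
  | mul_X q i hq =>
    rw [map_mul, map_mul, map_mul, hq, aeval_X, eval_X]
    congr 1
    rcases i with i | o
    · simp [hE]
    · simp

open MvPolynomial in
lemma loj_dir {σ : Type} [Fintype σ] (p : MvPolynomial σ ℝ) (i : σ) (hd : pderiv i p ≠ 0)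
    (R : ℝ) : ∃ n : ℕ, ∃ C > 0, ∃ c > 0, ∀ x : σ → ℝ, (∀ j, |x j| ≤ R) → |eval x p| < c →
      eval x (pderiv i p) ≠ 0 → (∀ j, |eval x (pderiv j p)| ≤ |eval x (pderiv i p)|) →
      |eval x p| ≤ |eval x (pderiv i p)| ∧
      |eval x p| ^ (n + 1) ≤ C * |eval x (pderiv i p)| ^ (n + 2) := by
  have hp : p ≠ 0 := by rintro rfl; simp at hd
  set d := pderiv i p with hdd
  let K := Localization.Away (p * d)
  let al := algebraMap (MvPolynomial σ ℝ) K
  let w : K := IsLocalization.Away.invSelf (p * d)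
  have hw : al p * al d * w = 1 := by
    rw [← map_mul]
    exact IsLocalization.Away.mul_invSelf (p * d)
  -- first identity
  obtain ⟨N, b, hb⟩ := alg_ident p d hp hd
    (fun o => o.elim (al p * (al p * w)) (fun j => al (pderiv j p) * (al p * w)))
    (X (Sum.inr none)) (fun j => X (Sum.inr (some j))) (by
      intro j
      simp only [aeval_X, Sum.elim_inr, Option.elim]
      change (al p * (al p * w)) * al _ = al p * (al _ * (al p * w))
      ring)
  obtain ⟨N', b', hb'⟩ := alg_ident p d hp hd
    (fun o => o.elim (al d * (al d * w)) (fun j => al (pderiv j p) * (al p * w)))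
    1 (fun j => X (Sum.inr none) * X (Sum.inr (some j))) (by
      intro j
      simp only [map_one, map_mul, aeval_X, Sum.elim_inr, Option.elim]
      change 1 * al _ = al p * ((al d * (al d * w)) * (al _ * (al p * w)))
      linear_combination (-(al (pderiv j p)) * (al p * al d * w) - al (pderiv j p)) * hw)
  obtain ⟨M, hM0, hM⟩ := bdd_box b (max R 1)
  obtain ⟨M', hM'0, hM'⟩ := bdd_box b' (max R 1)
  refine ⟨N, M, hM0, M'⁻¹, by positivity, ?_⟩
  intro x hx hpc hdx hmax
  by_cases hpx : eval x p = 0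
  · simp only [hpx, abs_zero]
    refine ⟨abs_nonneg _, ?_⟩
    rw [zero_pow (by omega)]; positivity
  obtain ⟨E, hE, hE'⟩ := eval_loc p d x hpx hdx
  have hEw : E w = (eval x p)⁻¹ * (eval x d)⁻¹ := by
    have := congrArg E hw
    rw [map_mul, map_mul, map_one, hE, hE] at this
    field_simp
    linear_combination this
  have hdpos : 0 < |eval x d| := abs_pos.mpr hdx
  have hppos : 0 < |eval x p| := abs_pos.mpr hpx
  have hzj : ∀ j, E (al (pderiv j p) * (al p * w)) = eval x (pderiv j p) / eval x d := by
    intro j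
    rw [map_mul, map_mul, hE, hE, hEw]; field_simp
  have hzj1 : ∀ j, |E (al (pderiv j p) * (al p * w))| ≤ 1 := by
    intro j
    rw [hzj, abs_div]
    exact div_le_one_of_le₀ (hmax j) (abs_nonneg _)
  have hle : |eval x p| ≤ |eval x d| := by
    by_contra! hlt
    have h1 := congrArg E hb'
    rw [map_mul, hE, hE'] at h1
    simp only [map_one, one_pow] at h1
    have h2 := hM' (Sum.elim x (fun o => E (Option.elim o (al d * (al d * w)) (fun j => al (pderiv j p) * (al p * w))))) (by
      rintro (j | (_ | j))
      · exact (hx j).trans (le_max_left _ _)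
      · refine le_trans ?_ (le_max_right _ _)
        have : E (al d * (al d * w)) = eval x d / eval x p := by
          rw [map_mul, map_mul, hE, hEw]; field_simp
        simp only [Sum.elim_inr, Option.elim]
        rw [this, abs_div]
        exact div_le_one_of_le₀ hlt.le (abs_nonneg _)
      · exact (hzj1 j).trans (le_max_right _ _))
    have h3 := congrArg abs h1
    rw [abs_mul, abs_one] at h3
    have h4 : |eval x p| * M' < 1 := by
      calc _ < M'⁻¹ * M' := by gcongr
        _ = 1 := by field_simp
    have h5 := mul_le_mul_of_nonneg_left h2 hppos.le
    linarith
  refine ⟨hle, ?_⟩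
  have h1 := congrArg E hb
  rw [map_mul, hE, map_pow, hE', hE'] at h1
  have hz : E (al p * (al p * w)) = eval x p / eval x d := by
    rw [map_mul, map_mul, hE, hEw]; field_simp
  have hz1 : |eval x p / eval x d| ≤ 1 := by
    rw [abs_div]
    exact div_le_one_of_le₀ hle (abs_nonneg _)
  have h2 := hM (Sum.elim x (fun o => E (Option.elim o (al p * (al p * w)) (fun j => al (pderiv j p) * (al p * w))))) (by
      rintro (j | (_ | j))
      · exact (hx j).trans (le_max_left _ _)
      · refine le_trans ?_ (le_max_right _ _)
        simp only [Sum.elim_inr, Option.elim]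
        rw [hz]; exact hz1
      · exact (hzj1 j).trans (le_max_right _ _))
  simp only [eval_X, Sum.elim_inr, Option.elim] at h1
  rw [hz] at h1
  have h3 := congrArg abs h1
  rw [abs_mul, abs_pow, abs_div, div_pow] at h3
  have h4 : |eval x p| ^ N ≤ |eval x p| * M * |eval x d| ^ N := by
    rw [← div_le_iff₀ (by positivity), h3]
    exact mul_le_mul_of_nonneg_left h2 hppos.le
  have h6 : |eval x p| ^ (N + 2) ≤ |eval x p| * (M * |eval x d| ^ (N + 2)) := by
    calc |eval x p| ^ (N + 2) = |eval x p| ^ N * |eval x p| ^ 2 := by ring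
      _ ≤ (|eval x p| * M * |eval x d| ^ N) * |eval x d| ^ 2 := by gcongr
      _ = _ := by ring
  have h7 : |eval x p| ^ (N + 2) = |eval x p| * |eval x p| ^ (N + 1) := by ring
  rw [h7] at h6
  exact le_of_mul_le_mul_left h6 hppos



lemma fin_min {ι : Type} [Fintype ι] (f : ι → ℝ) (hf : ∀ i, 0 < f i) : ∃ c > 0, ∀ i, c ≤ f i := by
  cases isEmpty_or_nonempty ι
  · exact ⟨1, one_pos, fun i => isEmptyElim i⟩
  · obtain ⟨i, hi⟩ := Finite.exists_min f
    exact ⟨f i, hf i, hi⟩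

open MvPolynomial in
/-- Łojasiewicz gradient inequality for polynomials, on a bounded box. -/
lemma loj {σ : Type} [Fintype σ] (p : MvPolynomial σ ℝ) (R : ℝ) :
    ∃ n : ℕ, ∃ C > 0, ∃ c > 0, ∀ x : σ → ℝ, (∀ j, |x j| ≤ R) → |eval x p| < c →
      |eval x p| ^ (n + 1) ≤ C * (∑ j, |eval x (pderiv j p)|) ^ (n + 2) := by
  have hline : ∀ (x y : σ → ℝ) (g : MvPolynomial σ ℝ) (s : ℝ),
      Polynomial.eval s (aeval (fun j => Polynomial.C (x j) + Polynomial.X * Polynomial.C (y j - x j)) g)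
        = eval (fun j => x j + s * (y j - x j)) g := by
    intro x y g s
    induction g using MvPolynomial.induction_on with
    | C a => simp
    | add p q hp hq => simp only [map_add, Polynomial.eval_add, hp, hq]
    | mul_X q i hq =>
      rw [map_mul, map_mul, Polynomial.eval_mul, hq, aeval_X, eval_X]
      simp only [Polynomial.eval_add, Polynomial.eval_mul, Polynomial.eval_C, Polynomial.eval_X]
  by_cases hall : ∀ i, pderiv i p = 0
  · have hconst : ∀ x, eval x p = eval 0 p := by
      intro x
      have h1 := chain_rule (κ := ℝ) (fun j => Polynomial.C ((0 : σ → ℝ) j) + Polynomial.X * Polynomial.C (x j - (0 : σ → ℝ) j)) p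
      simp only [hall, map_zero, zero_mul, mul_zero, Finset.sum_const_zero] at h1
      have h2 := Polynomial.derivative_eq_zero.mp h1
      obtain ⟨a, ha⟩ := Polynomial.natDegree_eq_zero.mp h2
      have h3 := hline 0 x p 1
      have h4 := hline 0 x p 0
      rw [← ha, Polynomial.eval_C] at h3 h4
      have e1 : (fun j => (0 : σ → ℝ) j + 1 * (x j - (0 : σ → ℝ) j)) = x := by funext j; simp
      have e2 : (fun j => (0 : σ → ℝ) j + 0 * (x j - (0 : σ → ℝ) j)) = 0 := by funext j; simp
      rw [e1] at h3
      rw [e2] at h4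
      rw [← h3, ← h4]
    by_cases h0 : eval 0 p = 0
    · refine ⟨0, 1, one_pos, 1, one_pos, fun x _ _ => ?_⟩
      rw [hconst x, h0]; simp; positivity
    · refine ⟨0, 1, one_pos, _, abs_pos.mpr h0, fun x _ hx => ?_⟩
      rw [hconst x] at hx
      exact absurd hx (lt_irrefl _)
  push Not at hall
  obtain ⟨i0, hi0⟩ := hall
  have hdir : ∀ i, ∃ n : ℕ, ∃ C > 0, ∃ c > 0, ∀ x : σ → ℝ, (∀ j, |x j| ≤ R + 1) → |eval x p| < c →
      eval x (pderiv i p) ≠ 0 → (∀ j, |eval x (pderiv j p)| ≤ |eval x (pderiv i p)|) →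
      |eval x p| ≤ |eval x (pderiv i p)| ∧
      |eval x p| ^ (n + 1) ≤ C * |eval x (pderiv i p)| ^ (n + 2) := by
    intro i
    by_cases hi : pderiv i p = 0
    · refine ⟨0, 1, one_pos, 1, one_pos, fun x _ _ h => ?_⟩
      rw [hi] at h; simp at h
    · exact loj_dir p i hi (R + 1)
  choose n C hC c hc H using hdir
  obtain ⟨c', hc', hcc⟩ := fin_min c hc
  have hN : ∀ i, n i ≤ ∑ j, n j := fun i =>
    Finset.single_le_sum (f := n) (fun j _ => Nat.zero_le _) (Finset.mem_univ i)
  have hCC : ∀ i, C i ≤ ∑ j, C j := fun i =>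
    Finset.single_le_sum (f := C) (fun j _ => (hC j).le) (Finset.mem_univ i)
  set N := ∑ j, n j
  set D := ∑ j, C j
  have hD : 0 < D := (hC i0).trans_le (hCC i0)
  have main : ∀ x : σ → ℝ, (∀ j, |x j| ≤ R + 1) → |eval x p| < c' → eval x (pderiv i0 p) ≠ 0 →
      |eval x p| ^ (N + 1) ≤ D * (∑ j, |eval x (pderiv j p)|) ^ (N + 2) := by
    intro x hx hpx hne
    haveI : Nonempty σ := ⟨i0⟩
    obtain ⟨i, hi⟩ := Finite.exists_max (fun j => |eval x (pderiv j p)|)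
    have hine : eval x (pderiv i p) ≠ 0 := by
      intro h
      have := hi i0
      rw [h, abs_zero] at this
      exact hne (abs_nonpos_iff.mp this)
    obtain ⟨h1, h2⟩ := H i x hx (hpx.trans_le (hcc i)) hine hi
    have h3 : |eval x (pderiv i p)| ≤ ∑ j, |eval x (pderiv j p)| :=
      Finset.single_le_sum (f := fun j => |eval x (pderiv j p)|) (fun j _ => abs_nonneg _) (Finset.mem_univ i)
    obtain ⟨m, hm⟩ := Nat.exists_eq_add_of_le (hN i)
    calc |eval x p| ^ (N + 1) = |eval x p| ^ (n i + 1) * |eval x p| ^ m := by rw [hm]; ring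
      _ ≤ (C i * |eval x (pderiv i p)| ^ (n i + 2)) * |eval x (pderiv i p)| ^ m := by
          have := (hC i).le
          gcongr
      _ = C i * |eval x (pderiv i p)| ^ (N + 2) := by rw [hm]; ring
      _ ≤ _ := by
          have := (hC i).le
          have := hCC i
          gcongr
  refine ⟨N, D, hD, c', hc', fun x hx hpx => ?_⟩
  obtain ⟨y, hy⟩ : ∃ y, eval y (pderiv i0 p) ≠ 0 := by
    by_contra! h
    exact hi0 (MvPolynomial.funext fun y => by rw [h y]; simp)
  let Q := aeval (fun j => Polynomial.C (x j) + Polynomial.X * Polynomial.C (y j - x j)) (pderiv i0 p)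
  have hQ : Q ≠ 0 := by
    intro h
    have := hline x y (pderiv i0 p) 1
    change Polynomial.eval 1 Q = _ at this
    rw [h] at this
    apply hy
    simpa using this.symm
  let z : ℝ → σ → ℝ := fun s j => x j + s * (y j - x j)
  have hz0 : z 0 = x := by funext j; simp [z]
  have hzc : Continuous z := by fun_prop
  have hpc : ∀ q : MvPolynomial σ ℝ, Continuous fun s => eval (z s) q := fun q =>
    (MvPolynomial.continuous_eval q).comp hzc
  have ev1 : ∀ᶠ s in nhdsWithin (0:ℝ) {0}ᶜ, eval (z s) (pderiv i0 p) ≠ 0 := by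
    have hfin : ({s : ℝ | Polynomial.IsRoot Q s} \ {0}).Finite :=
      (Polynomial.finite_setOf_isRoot hQ).diff
    have := hfin.isClosed.isOpen_compl.mem_nhds (x := (0:ℝ)) (by simp)
    filter_upwards [nhdsWithin_le_nhds this, self_mem_nhdsWithin] with s hs hs0
    intro h
    apply hs
    refine ⟨?_, hs0⟩
    change Polynomial.eval s Q = 0
    rw [← h]; exact hline x y (pderiv i0 p) s
  have ev2 : ∀ᶠ s in nhdsWithin (0:ℝ) {0}ᶜ, |eval (z s) p| < c' := by
    apply nhdsWithin_le_nhds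
    apply (continuous_abs.comp (hpc p)).continuousAt.eventually_lt_const
    simpa [hz0] using hpx
  have ev3 : ∀ᶠ s in nhdsWithin (0:ℝ) {0}ᶜ, ∀ j, |z s j| ≤ R + 1 := by
    rw [Filter.eventually_all]
    intro j
    have hcj : Continuous fun s => |z s j| := by fun_prop
    have : ∀ᶠ s in nhds (0:ℝ), |z s j| < R + 1 := by
      apply hcj.continuousAt.eventually_lt_const
      beta_reduce
      rw [hz0]; linarith [hx j]
    exact nhdsWithin_le_nhds (this.mono fun s h => h.le)
  have ev : ∀ᶠ s in nhdsWithin (0:ℝ) {0}ᶜ, |eval (z s) p| ^ (N + 1) ≤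
      D * (∑ j, |eval (z s) (pderiv j p)|) ^ (N + 2) := by
    filter_upwards [ev1, ev2, ev3] with s h1 h2 h3 using main _ h3 h2 h1
  have cl : Continuous fun s => |eval (z s) p| ^ (N + 1) := (hpc p).abs.pow _
  have cr : Continuous fun s => D * (∑ j, |eval (z s) (pderiv j p)|) ^ (N + 2) :=
    continuous_const.mul ((continuous_finset_sum _ fun j _ => (hpc _).abs).pow _)
  have := le_of_tendsto_of_tendsto (cl.continuousWithinAt (s := {0}ᶜ) (x := 0)).tendsto
    (cr.continuousWithinAt (s := {0}ᶜ) (x := 0)).tendsto ev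
  simpa only [hz0] using this



lemma pow_sub_pow_le_aux (n : ℕ) {a b : ℝ} (ha : 0 ≤ a) (hb : 0 ≤ b) (hba : b ≤ a) :
    a ^ (n + 2) - b ^ (n + 2) ≤ (n + 2) * a ^ (n + 1) * (a - b) := by
  have hind : ∀ m : ℕ, a ^ (m + 1) - b ^ (m + 1) ≤ (m + 1) * a ^ m * (a - b) := by
    intro m
    induction m with
    | zero => simp
    | succ m ih =>
      have h1 : b ^ (m + 1) ≤ a ^ (m + 1) := by gcongr
      have h2 : 0 ≤ a - b := sub_nonneg.mpr hba
      calc a ^ (m + 1 + 1) - b ^ (m + 1 + 1)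
          = a * (a ^ (m + 1) - b ^ (m + 1)) + b ^ (m + 1) * (a - b) := by ring
        _ ≤ a * ((m + 1) * a ^ m * (a - b)) + a ^ (m + 1) * (a - b) := by gcongr
        _ = _ := by push_cast; ring
  have := hind (n + 1)
  push_cast at this
  convert this using 2
  ring

lemma trapping {E : Type*} [PseudoMetricSpace E] (p : ℕ → E) (q : E) (φ : ℕ → ℕ)
    (hφ : StrictMono φ) (hlim : Filter.Tendsto (fun k => p (φ k)) Filter.atTop (nhds q))
    (Δ : ℕ → ℝ) (hΔ0 : ∀ k, 0 ≤ Δ k) (hΔa : ∀ k, Δ (k + 1) ≤ Δ k)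
    (hΔ : Filter.Tendsto Δ Filter.atTop (nhds 0))
    (L ρ c C : ℝ) (n K0 : ℕ) (hL : 0 ≤ L) (hρ : 0 < ρ) (hc : 0 < c) (hC : 0 ≤ C)
    (H1 : ∀ k, dist (p (k + 1)) q ≤ L * dist (p k) q)
    (H2 : ∀ k, dist (p k) q < ρ → c * dist (p (k + 1)) (p k) ^ 2 ≤ Δ k - Δ (k + 1))
    (H3 : ∀ k, K0 ≤ k → Δ (k + 1) ^ (n + 1) ≤ C * dist (p (k + 1)) (p k) ^ (n + 2)) :
    Filter.Tendsto p Filter.atTop (nhds q) := by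
  let e : ℕ → ℝ := fun k => Δ k ^ ((1 : ℝ) / ((n + 2 : ℕ) : ℝ))
  have he0 : ∀ k, 0 ≤ e k := fun k => Real.rpow_nonneg (hΔ0 k) _
  have hepow : ∀ k, e k ^ (n + 2) = Δ k := by
    intro k
    simp only [e, one_div]
    exact Real.rpow_inv_natCast_pow (hΔ0 k) (by omega)
  have hea : ∀ k, e (k + 1) ≤ e k := fun k =>
    Real.rpow_le_rpow (hΔ0 _) (hΔa k) (by positivity)
  have hetend : Filter.Tendsto e Filter.atTop (nhds 0) := by
    have h := hΔ.rpow_const (p := (1 : ℝ) / ((n + 2 : ℕ) : ℝ)) (Or.inr (by positivity))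
    rwa [Real.zero_rpow (by positivity)] at h
  have he1 : ∀ k, K0 ≤ k → e (k + 1) ^ (n + 1) ≤ (C + 1) * dist (p (k + 1)) (p k) := by
    intro k hk
    have h := H3 k hk
    rw [← hepow, ← pow_mul, mul_comm (n + 2), pow_mul] at h
    have h2 : C ≤ (C + 1) ^ (n + 2) := by
      calc C ≤ C + 1 := by linarith
        _ ≤ _ := le_self_pow₀ (by linarith) (by omega)
    refine le_of_pow_le_pow_left₀ (n := n + 2) (by omega) (by positivity) ?_
    rw [mul_pow]
    refine h.trans ?_
    gcongr
  let K := (n + 2) * (C + 1) / c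
  have hK : 0 ≤ K := by positivity
  have key : ∀ k, K0 ≤ k → dist (p (k + 1)) q < ρ →
      2 * dist (p (k + 2)) (p (k + 1)) ≤ dist (p (k + 1)) (p k) + K * (e (k + 1) - e (k + 2)) := by
    intro k hk hd
    have h1 := H2 (k + 1) hd
    rw [← hepow, ← hepow] at h1
    have h2 := pow_sub_pow_le_aux n (he0 (k + 1)) (he0 (k + 2)) (hea (k + 1))
    have h3 := he1 k hk
    have h4 : 0 ≤ e (k + 1) - e (k + 2) := sub_nonneg.mpr (hea (k + 1))
    have h5 : c * dist (p (k + 2)) (p (k + 1)) ^ 2 ≤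
        c * (dist (p (k + 1)) (p k) * (K * (e (k + 1) - e (k + 2)))) := by
      calc c * dist (p (k + 2)) (p (k + 1)) ^ 2 ≤ _ := h1
        _ ≤ _ := h2
        _ ≤ (n + 2) * ((C + 1) * dist (p (k + 1)) (p k)) * (e (k + 1) - e (k + 2)) := by gcongr
        _ = _ := by simp only [K]; field_simp
    have h6 := le_of_mul_le_mul_left h5 hc
    have h7 : 0 ≤ K * (e (k + 1) - e (k + 2)) := by positivity
    have h8 : 0 ≤ dist (p (k + 1)) (p k) := dist_nonneg
    refine abs_le_of_sq_le_sq' ?_ (by positivity) |>.2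
    nlinarith [sq_nonneg (dist (p (k + 1)) (p k) - K * (e (k + 1) - e (k + 2)))]
  rw [Metric.tendsto_atTop]
  intro ε0 hε0
  set ε := min ε0 ρ with hε
  have hεpos : 0 < ε := lt_min hε0 hρ
  have t1 : Filter.Tendsto (fun j => (2 * L + 1) * dist (p (φ j)) q + K * e (φ j)) Filter.atTop (nhds 0) := by
    have a1 := (tendsto_iff_dist_tendsto_zero.mp hlim).const_mul (2 * L + 1)
    have a2 := (hetend.comp hφ.tendsto_atTop).const_mul K
    have := a1.add a2
    simpa using this
  obtain ⟨j, hj1, hj2⟩ := ((t1.eventually_lt_const hεpos).and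
    (hφ.tendsto_atTop.eventually_ge_atTop K0)).exists
  set k0 := φ j
  have claim : ∀ m, dist (p (k0 + 1 + m)) q + dist (p (k0 + 1 + m)) (p (k0 + m)) +
      K * e (k0 + 1 + m) < ε := by
    intro m
    induction m with
    | zero =>
      have b1 := H1 k0
      have b2 := dist_triangle_right (p (k0 + 1)) (p k0) q
      have b3 := mul_le_mul_of_nonneg_left (hea k0) hK
      simp only [add_zero]
      linarith
    | succ m ih =>
      have c1 : 0 ≤ dist (p (k0 + 1 + m)) (p (k0 + m)) := dist_nonneg
      have c2 : 0 ≤ K * e (k0 + 1 + m) := mul_nonneg hK (he0 _)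
      have c3 : dist (p (k0 + m + 1)) q < ρ := by
        have : ε ≤ ρ := min_le_right _ _
        rw [show k0 + m + 1 = k0 + 1 + m by ring]
        linarith
      have c4 := key (k0 + m) (by omega) c3
      have c5 := dist_triangle (p (k0 + m + 2)) (p (k0 + m + 1)) q
      rw [show k0 + m + 2 = k0 + 1 + (m + 1) by ring, show k0 + m + 1 = k0 + 1 + m by ring] at c4 c5
      rw [show k0 + (m + 1) = k0 + 1 + m by ring]
      linarith
  refine ⟨k0 + 1, fun k hk => ?_⟩
  obtain ⟨m, rfl⟩ := Nat.exists_eq_add_of_le hk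
  have c1 : 0 ≤ dist (p (k0 + 1 + m)) (p (k0 + m)) := dist_nonneg
  have c2 : 0 ≤ K * e (k0 + 1 + m) := mul_nonneg hK (he0 _)
  have : ε ≤ ε0 := min_le_left _ _
  linarith [claim m]



section MatLemmas
open Matrix
open scoped Matrix.Norms.Frobenius

variable {ι : Type} [Fintype ι] [DecidableEq ι]

lemma fnorm_sq {κ : Type} [Fintype κ] (M : Matrix ι κ ℝ) : ‖M‖ ^ 2 = ∑ i, ∑ j, M i j ^ 2 := by
  rw [Matrix.frobenius_norm_def, ← Real.sqrt_eq_rpow, Real.sq_sqrt (by positivity)]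
  simp

lemma fnorm_sq_trace {κ : Type} [Fintype κ] (M : Matrix ι κ ℝ) : ‖M‖ ^ 2 = trace (Mᵀ * M) := by
  rw [fnorm_sq, Finset.sum_comm]
  simp [trace, Matrix.mul_apply, sq]

lemma abs_entry_le {κ : Type} [Fintype κ] (M : Matrix ι κ ℝ) (i : ι) (j : κ) : |M i j| ≤ ‖M‖ := by
  apply abs_le_of_sq_le_sq _ (norm_nonneg _)
  rw [fnorm_sq]
  calc M i j ^ 2 ≤ ∑ j, M i j ^ 2 :=
        Finset.single_le_sum (f := fun j => M i j ^ 2) (fun _ _ => sq_nonneg _) (Finset.mem_univ j)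
    _ ≤ _ := Finset.single_le_sum (f := fun i => ∑ j, M i j ^ 2)
        (fun _ _ => Finset.sum_nonneg fun _ _ => sq_nonneg _) (Finset.mem_univ i)

lemma sum_sq_le_sq_sum_aux {α : Type} {s : Finset α} {f : α → ℝ} (hf : ∀ i ∈ s, 0 ≤ f i) :
    ∑ i ∈ s, f i ^ 2 ≤ (∑ i ∈ s, f i) ^ 2 := by
  rw [sq (∑ i ∈ s, f i), Finset.sum_mul]
  apply Finset.sum_le_sum
  intro i hi
  rw [sq]
  exact mul_le_mul_of_nonneg_left (Finset.single_le_sum hf hi) (hf i hi)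

lemma fnorm_le_sum {κ : Type} [Fintype κ] (M : Matrix ι κ ℝ) : ‖M‖ ≤ ∑ i, ∑ j, |M i j| := by
  refine le_of_pow_le_pow_left₀ (n := 2) (by omega) (by positivity) ?_
  rw [fnorm_sq]
  calc ∑ i, ∑ j, M i j ^ 2 ≤ ∑ i, (∑ j, |M i j|) ^ 2 := by
        gcongr with i
        have := sum_sq_le_sq_sum_aux (s := Finset.univ) (f := fun j => |M i j|) (fun _ _ => abs_nonneg _)
        simpa using this
    _ ≤ _ := sum_sq_le_sq_sum_aux (fun _ _ => by positivity)

lemma trace_mul_le (A B : Matrix ι ι ℝ) : |trace (A * B)| ≤ ‖A‖ * ‖B‖ := by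
  apply abs_le_of_sq_le_sq _ (by positivity)
  rw [mul_pow, fnorm_sq, fnorm_sq, Finset.sum_comm (f := fun i j => B i j ^ 2)]
  simp only [trace, diag, Matrix.mul_apply]
  simp only [← Finset.sum_product']
  exact Finset.sum_mul_sq_le_sq_mul_sq _ (fun x : ι × ι => A x.1 x.2) (fun x => B x.2 x.1)

lemma trace_form {κ : Type} [Fintype κ] (S Q : Matrix ι ι ℝ) (W : Matrix ι κ ℝ) (l : ℝ)
    (h : ∀ v, Q *ᵥ v = v → l * (v ⬝ᵥ v) ≤ v ⬝ᵥ S *ᵥ v) (hW : Q * W = W) :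
    l * trace (Wᵀ * W) ≤ trace (Wᵀ * (S * W)) := by
  simp only [trace, diag, Finset.mul_sum]
  apply Finset.sum_le_sum
  intro i _
  have := h (fun a => W a i) (by
    funext a
    have := congrFun (congrFun hW a) i
    simpa [Matrix.mul_apply, mulVec, dotProduct] using this)
  simpa [Matrix.mul_apply, mulVec, dotProduct] using this

/-- symmetric idempotent -/
def IsPr (Q : Matrix ι ι ℝ) : Prop := Qᵀ = Q ∧ Q * Q = Q

lemma IsPr.one_sub {Q : Matrix ι ι ℝ} (h : IsPr Q) : IsPr (1 - Q) := by
  refine ⟨by simp [h.1], ?_⟩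
  rw [Matrix.sub_mul, Matrix.mul_sub, Matrix.mul_sub, h.2]
  simp

lemma growth {Q P S : Matrix ι ι ℝ} (hQ : IsPr Q) (hP : IsPr P) (htr : trace Q = trace P)
    (hS : Q * S = S * Q) {l u : ℝ}
    (h1 : ∀ v, Q *ᵥ v = v → l * (v ⬝ᵥ v) ≤ v ⬝ᵥ S *ᵥ v)
    (h2 : ∀ v, (1 - Q) *ᵥ v = v → v ⬝ᵥ S *ᵥ v ≤ u * (v ⬝ᵥ v)) :
    (l - u) / 2 * ‖P - Q‖ ^ 2 ≤ trace (Q * S) - trace (P * S) := by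
  obtain ⟨hQ1, hQ2⟩ := hQ
  obtain ⟨hP1, hP2⟩ := hP
  have a1 := trace_form S Q (Q * (1 - P)) l h1 (by rw [← Matrix.mul_assoc, hQ2])
  have hQ3 : (1 - Q) * (1 - Q) = 1 - Q := (IsPr.one_sub ⟨hQ1, hQ2⟩).2
  have a2 := trace_form (-S) (1 - Q) ((1 - Q) * P) (-u) (by
    intro v hv
    have := h2 v hv
    rw [neg_mulVec, dotProduct_neg]; linarith) (by rw [← Matrix.mul_assoc, hQ3])
  have cyc : ∀ A B : Matrix ι ι ℝ, trace (A * B) = trace (B * A) := Matrix.trace_mul_comm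
  have nrm : ‖P - Q‖ ^ 2 = trace P + trace Q - 2 * trace (P * Q) := by
    rw [fnorm_sq_trace]
    have : (P - Q)ᵀ * (P - Q) = P * P + Q * Q - P * Q - Q * P := by
      rw [transpose_sub, hP1, hQ1]; noncomm_ring
    rw [this, hP2, hQ2]
    simp only [trace_sub, trace_add]
    rw [cyc Q P]; ring
  have e1 : trace ((Q * (1 - P))ᵀ * (Q * (1 - P))) = trace Q - trace (P * Q) := by
    have : (Q * (1 - P))ᵀ * (Q * (1 - P)) = (1 - P) * ((Q * Q) * (1 - P)) := by
      rw [transpose_mul, transpose_sub, transpose_one, hP1, hQ1]; noncomm_ring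
    rw [this, hQ2, cyc, Matrix.mul_assoc, (IsPr.one_sub ⟨hP1, hP2⟩).2, Matrix.mul_sub, Matrix.mul_one,
      trace_sub, cyc Q P]
  have e2 : trace (((1 - Q) * P)ᵀ * ((1 - Q) * P)) = trace P - trace (P * Q) := by
    have : ((1 - Q) * P)ᵀ * ((1 - Q) * P) = P * (((1 - Q) * (1 - Q)) * P) := by
      rw [transpose_mul, transpose_sub, transpose_one, hP1, hQ1]; noncomm_ring
    rw [this, hQ3, cyc, Matrix.mul_assoc, hP2, Matrix.sub_mul, Matrix.one_mul,
      trace_sub, cyc Q P]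
  have e3 : trace ((Q * (1 - P))ᵀ * (S * (Q * (1 - P)))) = trace (Q * S) - trace (P * (Q * S)) := by
    have : (Q * (1 - P))ᵀ * (S * (Q * (1 - P))) = (1 - P) * ((Q * (S * Q)) * (1 - P)) := by
      rw [transpose_mul, transpose_sub, transpose_one, hP1, hQ1]; noncomm_ring
    rw [this, ← hS, ← Matrix.mul_assoc Q Q S, hQ2, cyc, Matrix.mul_assoc,
      (IsPr.one_sub ⟨hP1, hP2⟩).2, Matrix.mul_sub, Matrix.mul_one, trace_sub, cyc (Q * S) P]
  have e4 : trace (((1 - Q) * P)ᵀ * (-S * ((1 - Q) * P))) = - trace (P * S) + trace (P * (Q * S)) := by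
    have : ((1 - Q) * P)ᵀ * (-S * ((1 - Q) * P)) = P * ((-((1 - Q) * S * (1 - Q))) * P) := by
      rw [transpose_mul, transpose_sub, transpose_one, hP1, hQ1]; noncomm_ring
    have h5 : (1 - Q) * S * (1 - Q) = S - Q * S := by
      have : (1 - Q) * S * (1 - Q) = S - Q * S - S * Q + Q * (S * Q) := by noncomm_ring
      rw [this, ← hS, ← Matrix.mul_assoc Q Q S, hQ2]; abel
    rw [this, h5, cyc, Matrix.mul_assoc, hP2, cyc]
    simp only [Matrix.mul_neg, Matrix.mul_sub, trace_neg, trace_sub]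
    ring
  rw [e1, e3] at a1
  rw [e2, e4] at a2
  rw [nrm, htr]
  rw [htr] at a1
  linarith

lemma form_abs_le (M : Matrix ι ι ℝ) (v : ι → ℝ) : |v ⬝ᵥ M *ᵥ v| ≤ ‖M‖ * (v ⬝ᵥ v) := by
  have h1 : v ⬝ᵥ M *ᵥ v = trace (M * vecMulVec v v) := by
    simp only [dotProduct, mulVec, trace, diag, Matrix.mul_apply, vecMulVec_apply, Finset.mul_sum]
    refine Finset.sum_congr rfl fun i _ => Finset.sum_congr rfl fun j _ => by ring
  have h2 : ‖vecMulVec v v‖ = v ⬝ᵥ v := by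
    have h3 : ‖vecMulVec v v‖ ^ 2 = (v ⬝ᵥ v) ^ 2 := by
      rw [fnorm_sq]
      simp only [dotProduct, vecMulVec_apply, sq, Finset.sum_mul_sum]
      refine Finset.sum_congr rfl fun i _ => Finset.sum_congr rfl fun j _ => by ring
    have h4 : 0 ≤ v ⬝ᵥ v := Finset.sum_nonneg fun i _ => mul_self_nonneg _
    exact (sq_eq_sq₀ (norm_nonneg _) h4).mp h3
  rw [h1, ← h2]
  exact trace_mul_le _ _

lemma pert {Q S : Matrix ι ι ℝ} (hQ : IsPr Q) {l l' : ℝ} (hl : l' < l)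
    (h : ∀ v, Q *ᵥ v = v → l * (v ⬝ᵥ v) ≤ v ⬝ᵥ S *ᵥ v) :
    ∃ ε > 0, ∀ Q' S' : Matrix ι ι ℝ, IsPr Q' → ‖Q' - Q‖ < ε → ‖S' - S‖ < ε →
      ∀ v, Q' *ᵥ v = v → l' * (v ⬝ᵥ v) ≤ v ⬝ᵥ S' *ᵥ v := by
  let M : Matrix ι ι ℝ × Matrix ι ι ℝ → Matrix ι ι ℝ :=
    fun x => x.1 * x.2 * x.1 - l' • x.1 + (1 - x.1)
  have hM : Continuous M := by fun_prop
  set η := min (l - l') 1 with hη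
  have hη0 : 0 < η := lt_min (by linarith) one_pos
  have hnh := Metric.continuousAt_iff.mp (hM.continuousAt (x := (Q, S))) η hη0
  obtain ⟨ε, hε, H⟩ := hnh
  refine ⟨ε, hε, fun Q' S' hQ' h1 h2 v hv => ?_⟩
  have h3 := @H (Q', S') (by
    rw [Prod.dist_eq, dist_eq_norm, dist_eq_norm]
    exact max_lt h1 h2)
  rw [dist_eq_norm] at h3
  have h4 := form_abs_le (M (Q', S') - M (Q, S)) v
  have hvv : 0 ≤ v ⬝ᵥ v := Finset.sum_nonneg fun i _ => mul_self_nonneg _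
  have h5 : v ⬝ᵥ M (Q', S') *ᵥ v = v ⬝ᵥ S' *ᵥ v - l' * (v ⬝ᵥ v) := by
    simp only [M, add_mulVec, sub_mulVec, smul_mulVec, one_mulVec, ← mulVec_mulVec, hv,
      dotProduct_add, dotProduct_sub, dotProduct_smul, smul_eq_mul, sub_self, add_zero]
    congr 1
    rw [dotProduct_mulVec, ← mulVec_transpose, hQ'.1, hv]
  have h6 : η * (v ⬝ᵥ v) ≤ v ⬝ᵥ M (Q, S) *ᵥ v := by
    set w := Q *ᵥ v with hw
    have hww : Q *ᵥ w = w := by rw [hw, mulVec_mulVec, hQ.2]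
    have b1 := h w hww
    have b2 : v ⬝ᵥ w = w ⬝ᵥ w := by
      conv_rhs => rw [hw, dotProduct_mulVec, ← mulVec_transpose, hQ.1, ← hw, hww, dotProduct_comm]
    have b3 : v ⬝ᵥ M (Q, S) *ᵥ v = w ⬝ᵥ S *ᵥ w - l' * (w ⬝ᵥ w) + (v ⬝ᵥ v - w ⬝ᵥ w) := by
      simp only [M, add_mulVec, sub_mulVec, smul_mulVec, one_mulVec, ← mulVec_mulVec, ← hw,
        dotProduct_add, dotProduct_sub, dotProduct_smul, smul_eq_mul, b2]
      congr 2
      rw [dotProduct_mulVec, ← mulVec_transpose, hQ.1]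
    have b4 : 0 ≤ w ⬝ᵥ w := Finset.sum_nonneg fun i _ => mul_self_nonneg _
    have b5 : 0 ≤ v ⬝ᵥ v - w ⬝ᵥ w := by
      have : v ⬝ᵥ v - w ⬝ᵥ w = (v - w) ⬝ᵥ (v - w) := by
        rw [dotProduct_sub, sub_dotProduct, sub_dotProduct, dotProduct_comm w v, b2]; ring
      rw [this]
      exact Finset.sum_nonneg fun i _ => mul_self_nonneg _
    have b6 : η ≤ l - l' := min_le_left _ _
    have b7 : η ≤ 1 := min_le_right _ _
    rw [b3]
    nlinarith
  have h7 : v ⬝ᵥ (M (Q', S') - M (Q, S)) *ᵥ v = v ⬝ᵥ M (Q', S') *ᵥ v - v ⬝ᵥ M (Q, S) *ᵥ v := by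
    rw [sub_mulVec, dotProduct_sub]
  rw [h7] at h4
  have h8 := (abs_le.mp h4).1
  have h9 : ‖M (Q', S') - M (Q, S)‖ * (v ⬝ᵥ v) ≤ η * (v ⬝ᵥ v) := by gcongr
  linarith

end MatLemmas



section GrLemmas
open Matrix
open scoped Matrix.Norms.Frobenius

/-- orthogonal projectors of rank `r` -/
def GrP {ι : Type} [Fintype ι] (r : ℕ) (P : Matrix ι ι ℝ) : Prop :=
  ∃ B : Matrix ι (Fin r) ℝ, Bᵀ * B = 1 ∧ P = B * Bᵀ

variable {ι : Type} [Fintype ι] [DecidableEq ι]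

lemma GrP.isPr {r : ℕ} {P : Matrix ι ι ℝ} (h : GrP r P) : IsPr P := by
  obtain ⟨B, hB, rfl⟩ := h
  refine ⟨by simp, ?_⟩
  rw [Matrix.mul_assoc, ← Matrix.mul_assoc Bᵀ, hB, Matrix.one_mul]

lemma GrP.tr {r : ℕ} {P : Matrix ι ι ℝ} (h : GrP r P) : trace P = r := by
  obtain ⟨B, hB, rfl⟩ := h
  rw [Matrix.trace_mul_comm, hB]; simp

lemma GrP.norm_sq {r : ℕ} {P : Matrix ι ι ℝ} (h : GrP r P) : ‖P‖ ^ 2 = r := by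
  rw [fnorm_sq_trace, h.isPr.1, h.isPr.2, h.tr]

lemma IsPr.diag_eq {P : Matrix ι ι ℝ} (h : IsPr P) (i : ι) : P i i = ∑ k, P i k ^ 2 := by
  have h1 := congrFun (congrFun h.2 i) i
  rw [Matrix.mul_apply] at h1
  rw [← h1]
  refine Finset.sum_congr rfl fun k _ => ?_
  have h2 := congrFun (congrFun h.1 i) k
  rw [Matrix.transpose_apply] at h2
  rw [h2, sq]

lemma IsPr.entry_le {P : Matrix ι ι ℝ} (h : IsPr P) (i j : ι) : |P i j| ≤ 1 := by
  have h1 := h.diag_eq i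
  have h2 : ∀ k, P i k ^ 2 ≤ P i i := fun k => by
    rw [h1]
    exact Finset.single_le_sum (f := fun k => P i k ^ 2) (fun _ _ => sq_nonneg _) (Finset.mem_univ k)
  have h3 : P i i ≤ 1 := by nlinarith [h2 i]
  apply abs_le_of_sq_le_sq _ zero_le_one
  linarith [h2 j]

lemma max_commute {r : ℕ} {P S : Matrix ι ι ℝ} (hP : GrP r P) (hS : Sᵀ = S)
    (hmax : ∀ Q, GrP r Q → trace (Q * S) ≤ trace (P * S)) : P * S = S * P := by
  have hP1 := hP.isPr.1
  set K := P * S - S * P with hK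
  have hKt : Kᵀ = -K := by
    rw [hK, transpose_sub, transpose_mul, transpose_mul, hP1, hS]; abel
  let U : ℝ → Matrix ι ι ℝ := fun s => NormedSpace.exp (s • K)
  have hUt : ∀ s, (U s)ᵀ = NormedSpace.exp (s • (-K)) := by
    intro s
    simp only [U]
    rw [← Matrix.exp_transpose, transpose_smul, hKt]
  have hUU : ∀ s, (U s)ᵀ * U s = 1 := by
    intro s
    rw [hUt, smul_neg, Matrix.exp_neg]
    exact Matrix.nonsing_inv_mul _ ((Matrix.isUnit_iff_isUnit_det _).mp (Matrix.isUnit_exp _))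
  have hgr : ∀ s, GrP r (U s * P * (U s)ᵀ) := by
    intro s
    obtain ⟨B, hB, rfl⟩ := hP
    refine ⟨U s * B, ?_, ?_⟩
    · rw [transpose_mul, Matrix.mul_assoc, ← Matrix.mul_assoc (U s)ᵀ, hUU, Matrix.one_mul, hB]
    · rw [transpose_mul]; simp only [Matrix.mul_assoc]
  let h : ℝ → ℝ := fun s => trace (U s * P * (U s)ᵀ * S)
  have hU0 : U 0 = 1 := by simp [U]
  have hloc : IsLocalMax h 0 := by
    apply Filter.Eventually.of_forall
    intro s
    have := hmax _ (hgr s)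
    simp only [h, hU0]
    simpa using this
  have d1 : HasDerivAt U K 0 := by
    have := hasDerivAt_exp_smul_const (𝕂 := ℝ) K (0:ℝ)
    rw [zero_smul, NormedSpace.exp_zero, one_mul] at this
    exact this
  have d2 : HasDerivAt (fun s => (U s)ᵀ) (-K) 0 := by
    have := hasDerivAt_exp_smul_const (𝕂 := ℝ) (-K) (0:ℝ)
    simp only [hUt]
    rw [zero_smul, NormedSpace.exp_zero, one_mul] at this
    exact this
  have d3 : HasDerivAt (fun s => U s * P * (U s)ᵀ * S) ((K * P + P * (-K)) * S) 0 := by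
    have := ((d1.mul_const P).mul d2).mul_const S
    rw [hU0, transpose_one, mul_one, one_mul] at this
    exact this
  have d4 : HasDerivAt h (trace ((K * P + P * (-K)) * S)) 0 := by
    have hl : HasFDerivAt (fun M : Matrix ι ι ℝ => trace M)
        (LinearMap.toContinuousLinearMap (Matrix.traceLinearMap ι ℝ ℝ)) (U 0 * P * (U 0)ᵀ * S) :=
      (LinearMap.toContinuousLinearMap (Matrix.traceLinearMap ι ℝ ℝ)).hasFDerivAt
    exact hl.comp_hasDerivAt (0:ℝ) d3
  have h0 := hloc.hasDerivAt_eq_zero d4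
  have h1 : trace ((K * P + P * (-K)) * S) = - ‖K‖ ^ 2 := by
    rw [fnorm_sq_trace, hKt]
    have e1 : (K * P + P * (-K)) * S = K * (P * S) - P * (K * S) := by noncomm_ring
    have e2 : trace (P * (K * S)) = trace (K * (S * P)) := by
      rw [Matrix.trace_mul_comm, Matrix.mul_assoc]
    rw [e1, trace_sub, e2, ← trace_sub, ← Matrix.mul_sub, ← hK]; simp
  have h2 : ‖K‖ = 0 := by
    rw [h1] at h0
    exact pow_eq_zero_iff (two_ne_zero) |>.mp (neg_eq_zero.mp h0)
  exact sub_eq_zero.mp (norm_eq_zero.mp h2)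

end GrLemmas



section Spectral
open Matrix

/-- spectral gap data at level `r` -/
def GapAt {ι : Type} [Fintype ι] [DecidableEq ι] (r : ℕ) (S : Matrix ι ι ℝ) : Prop :=
  ∃ Q : Matrix ι ι ℝ, ∃ l u : ℝ, GrP r Q ∧ u < l ∧ Q * S = S * Q ∧
    (∀ v, Q *ᵥ v = v → l * (v ⬝ᵥ v) ≤ v ⬝ᵥ S *ᵥ v) ∧
    (∀ v, (1 - Q) *ᵥ v = v → v ⬝ᵥ S *ᵥ v ≤ u * (v ⬝ᵥ v))

lemma gap_of_diag {ι : Type} [Fintype ι] [DecidableEq ι] (S U : Matrix ι ι ℝ) (e : ι → ℝ)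
    (hU : Uᵀ * U = 1) (hU' : U * Uᵀ = 1) (hS : S = U * diagonal e * Uᵀ) (T : Finset ι) {l u : ℝ}
    (hlu : u < l) (h1 : ∀ i ∈ T, l ≤ e i) (h2 : ∀ i, i ∉ T → e i ≤ u) : GapAt T.card S := by
  let d : ι → ℝ := fun i => if i ∈ T then 1 else 0
  have hdd : ∀ M : Matrix ι ι ℝ, Uᵀ * (U * M) = M := fun M => by
    rw [← Matrix.mul_assoc, hU, Matrix.one_mul]
  have form : ∀ v, v ⬝ᵥ S *ᵥ v = ∑ i, e i * (Uᵀ *ᵥ v) i ^ 2 := by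
    intro v
    rw [hS, ← mulVec_mulVec, ← mulVec_mulVec, dotProduct_mulVec, ← mulVec_transpose]
    simp only [dotProduct, mulVec_diagonal]
    refine Finset.sum_congr rfl fun i _ => by ring
  have nrm : ∀ v : ι → ℝ, v ⬝ᵥ v = ∑ i, (Uᵀ *ᵥ v) i ^ 2 := by
    intro v
    have : v ⬝ᵥ v = v ⬝ᵥ (U * Uᵀ) *ᵥ v := by rw [hU', one_mulVec]
    rw [this, ← mulVec_mulVec, dotProduct_mulVec, ← mulVec_transpose]
    simp only [dotProduct, sq]
  have act : ∀ v i, (Uᵀ *ᵥ ((U * diagonal d * Uᵀ) *ᵥ v)) i = d i * (Uᵀ *ᵥ v) i := by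
    intro v i
    rw [mulVec_mulVec, Matrix.mul_assoc, hdd, ← mulVec_mulVec, mulVec_diagonal]
  refine ⟨U * diagonal d * Uᵀ, l, u, ?_, hlu, ?_, ?_, ?_⟩
  · let f : Fin T.card ≃ T := T.equivFin.symm
    refine ⟨U.submatrix id (fun i => (f i : ι)), ?_, ?_⟩
    · ext i j
      have := congrFun (congrFun hU (f i)) (f j)
      rw [Matrix.mul_apply] at this ⊢
      simp only [transpose_apply, submatrix_apply, id] at this ⊢
      rw [this, Matrix.one_apply, Matrix.one_apply]
      congr 1
      simp [Subtype.coe_inj]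
    · ext a b
      simp only [Matrix.mul_apply, diagonal_apply, transpose_apply, submatrix_apply, id, mul_ite, mul_zero,
        Finset.sum_ite_eq', Finset.mem_univ, if_true, d, mul_one, ite_mul, zero_mul]
      rw [Equiv.sum_comp f (fun x : T => U a x * U b x), Finset.sum_ite_mem, Finset.univ_inter,
        Finset.sum_coe_sort T (fun x => U a x * U b x)]
  · rw [hS]
    simp only [Matrix.mul_assoc, hdd]
    rw [← Matrix.mul_assoc (diagonal d), ← Matrix.mul_assoc (diagonal e), diagonal_mul_diagonal,
      diagonal_mul_diagonal]
    simp only [mul_comm]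
  · intro v hv
    rw [form, nrm, Finset.mul_sum]
    apply Finset.sum_le_sum
    intro i _
    by_cases hi : i ∈ T
    · exact mul_le_mul_of_nonneg_right (h1 i hi) (sq_nonneg _)
    · have := act v i
      rw [hv] at this
      simp only [d, if_neg hi, zero_mul] at this
      rw [this]; simp
  · intro v hv
    have hv0 : (U * diagonal d * Uᵀ) *ᵥ v = 0 := by
      rw [sub_mulVec, one_mulVec] at hv
      exact sub_eq_self.mp hv
    rw [form, nrm, Finset.mul_sum]
    apply Finset.sum_le_sum
    intro i _
    by_cases hi : i ∈ T
    · have := act v i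
      rw [hv0] at this
      simp only [d, if_pos hi, one_mul, mulVec_zero, Pi.zero_apply] at this
      rw [← this]; simp
    · exact mul_le_mul_of_nonneg_right (h2 i hi) (sq_nonneg _)

lemma real_spectral {ι : Type} [Fintype ι] [DecidableEq ι] {S : Matrix ι ι ℝ} (hH : S.IsHermitian) :
    ∃ U : Matrix ι ι ℝ, Uᵀ * U = 1 ∧ U * Uᵀ = 1 ∧ S = U * diagonal hH.eigenvalues * Uᵀ := by
  have hsp := hH.spectral_theorem
  rw [Unitary.conjStarAlgAut_apply] at hsp
  have hUs := hH.eigenvectorUnitary.2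
  rw [Matrix.mem_unitaryGroup_iff, star_eq_conjTranspose, conjTranspose_eq_transpose_of_trivial] at hUs
  have hUs' := hH.eigenvectorUnitary.2
  rw [Matrix.mem_unitaryGroup_iff', star_eq_conjTranspose, conjTranspose_eq_transpose_of_trivial] at hUs'
  refine ⟨_, hUs', hUs, ?_⟩
  rw [← conjTranspose_eq_transpose_of_trivial]
  exact hsp

lemma gap_of_sval {m : ℕ} {κ : Type} [Fintype κ] (Y : Matrix (Fin m) κ ℝ) (r : ℕ) (hr : r ≤ m)
    (h : sval Y (r + 1) < sval Y r) : GapAt r (Y * Yᵀ) := by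
  set e := (Matrix.isHermitian_mul_conjTranspose_self Y).eigenvalues with he
  have hr0 : r ≠ 0 := by rintro rfl; simp [sval] at h
  have hlen : (eigList Y).length = m := by simp [eigList]
  set l := (eigList Y).getD (r - 1) 0 with hl
  set u := (eigList Y).getD r 0 with hu
  have hul : u < l := by
    by_contra! hc
    exact absurd h (not_lt.mpr (Real.sqrt_le_sqrt hc))
  have hsort : (eigList Y).Pairwise (· ≥ ·) := by
    rw [eigList, List.pairwise_reverse]
    exact Multiset.pairwise_sort _ _
  have hcoe : ((eigList Y : List ℝ) : Multiset ℝ) = Finset.univ.val.map e := by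
    rw [eigList, Multiset.coe_reverse, Multiset.sort_eq]
  have hlget : l = (eigList Y)[r - 1]'(by omega) := by
    rw [hl, List.getD_eq_getElem]
  have hmono : ∀ i j (hi : i < (eigList Y).length) (hj : j < (eigList Y).length), i ≤ j →
      (eigList Y)[j] ≤ (eigList Y)[i] := by
    intro i j hi hj hij
    rcases hij.eq_or_lt with rfl | hlt
    · exact le_rfl
    · exact List.pairwise_iff_getElem.mp hsort i j hi hj hlt
  have htake : ∀ x ∈ (eigList Y).take r, l ≤ x := by
    intro x hx
    obtain ⟨i, hi, rfl⟩ := List.mem_iff_getElem.mp hx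
    rw [List.length_take] at hi
    rw [List.getElem_take, hlget]
    exact hmono _ _ _ _ (by omega)
  have hdrop : ∀ x ∈ (eigList Y).drop r, x ≤ u := by
    intro x hx
    obtain ⟨i, hi, rfl⟩ := List.mem_iff_getElem.mp hx
    rw [List.length_drop] at hi
    have : u = (eigList Y)[r]'(by omega) := by rw [hu, List.getD_eq_getElem]
    rw [List.getElem_drop, this]
    exact hmono _ _ _ _ (by omega)
  let T : Finset (Fin m) := Finset.univ.filter fun i => l ≤ e i
  have hcard : T.card = r := by
    have h1 : T.card = Multiset.countP (fun x => l ≤ x) (Finset.univ.val.map e) := by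
      rw [Multiset.countP_map]; rfl
    rw [h1, ← hcoe, Multiset.coe_countP, ← List.take_append_drop r (eigList Y), List.countP_append]
    have h2 : List.countP (fun x => decide (l ≤ x)) ((eigList Y).take r) = r := by
      rw [List.countP_eq_length.mpr (by simpa using htake), List.length_take]; omega
    have h3 : List.countP (fun x => decide (l ≤ x)) ((eigList Y).drop r) = 0 := by
      rw [List.countP_eq_zero]
      intro x hx
      have := hdrop x hx
      simp only [decide_eq_true_eq, not_le]; linarith
    rw [h2, h3, add_zero]
  have hnot : ∀ i, i ∉ T → e i ≤ u := by
    intro i hi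
    have hi' : ¬ l ≤ e i := by simpa [T] using hi
    have hmem : e i ∈ eigList Y := by
      rw [← Multiset.mem_coe, hcoe]
      exact Multiset.mem_map_of_mem e (Finset.mem_univ i)
    rw [← List.take_append_drop r (eigList Y), List.mem_append] at hmem
    rcases hmem with hm | hm
    · exact absurd (htake _ hm) hi'
    · exact hdrop _ hm
  set hH := Matrix.isHermitian_mul_conjTranspose_self Y with hHdef
  obtain ⟨U, hU1, hU2, hU3⟩ := real_spectral hH
  rw [← he] at hU3
  rw [← conjTranspose_eq_transpose_of_trivial Y]
  have := gap_of_diag (Y * Yᴴ) U e hU1 hU2 hU3 T hul (by simp [T]) hnot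
  rwa [hcard] at this

end Spectral



section Tensor
open Matrix

variable {N : ℕ} {I : Fin N → ℕ}

/-- insert an index in position `n` -/
def insI (n : Fin N) (j : Fin (I n)) (idx : (m : {m : Fin N // m ≠ n}) → Fin (I m.1)) :
    (i : Fin N) → Fin (I i) :=
  fun i => if h : i = n then Fin.cast (by rw [h]) j else idx ⟨i, h⟩

noncomputable def SS {R : Type} [CommRing R] [Algebra ℝ R] (X : ((n : Fin N) → Fin (I n)) → ℝ)
    (P : (n : Fin N) → Matrix (Fin (I n)) (Fin (I n)) R) (n : Fin N) :
    Matrix (Fin (I n)) (Fin (I n)) R :=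
  fun j j' => ∑ idx, ∑ idx', algebraMap ℝ R (X (insI n j idx) * X (insI n j' idx')) *
    ∏ m : {m : Fin N // m ≠ n}, P m.1 (idx m) (idx' m)

noncomputable def FF {R : Type} [CommRing R] [Algebra ℝ R] (X : ((n : Fin N) → Fin (I n)) → ℝ)
    (P : (n : Fin N) → Matrix (Fin (I n)) (Fin (I n)) R) : R :=
  ∑ idx, ∑ idx', algebraMap ℝ R (X idx * X idx') * ∏ n, P n (idx n) (idx' n)

lemma insI_self (n : Fin N) (j : Fin (I n)) (idx : (m : {m : Fin N // m ≠ n}) → Fin (I m.1)) :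
    insI n j idx n = j := by simp [insI]

lemma insI_ne (n : Fin N) (j : Fin (I n)) (idx : (m : {m : Fin N // m ≠ n}) → Fin (I m.1))
    (m : {m : Fin N // m ≠ n}) : insI n j idx m.1 = idx m := by simp [insI, m.2]

/-- splitting off an index -/
def splitE (n : Fin N) : (Fin (I n) × ((m : {m : Fin N // m ≠ n}) → Fin (I m.1))) ≃
    ((i : Fin N) → Fin (I i)) where
  toFun x := insI n x.1 x.2
  invFun f := (f n, fun m => f m.1)
  left_inv x := by
    ext1
    · exact insI_self _ _ _
    · funext m; exact insI_ne _ _ _ m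
  right_inv f := by
    funext i
    by_cases h : i = n
    · subst h; exact insI_self _ _ _
    · exact insI_ne n _ _ ⟨i, h⟩

lemma FF_eq {R : Type} [CommRing R] [Algebra ℝ R] (X : ((n : Fin N) → Fin (I n)) → ℝ)
    (P : (n : Fin N) → Matrix (Fin (I n)) (Fin (I n)) R) (n : Fin N) :
    FF X P = ∑ j, ∑ j', P n j j' * SS X P n j j' := by
  simp only [FF, SS, Finset.mul_sum]
  rw [← Equiv.sum_comp (splitE n), Fintype.sum_prod_type]
  refine Finset.sum_congr rfl fun j _ => ?_
  rw [Finset.sum_comm]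
  rw [← Equiv.sum_comp (splitE n), Fintype.sum_prod_type]
  refine Finset.sum_congr rfl fun j' _ => ?_
  rw [Finset.sum_comm]
  refine Finset.sum_congr rfl fun idx _ => Finset.sum_congr rfl fun idx' _ => ?_
  rw [Fintype.prod_eq_mul_prod_subtype_ne _ n]
  simp only [splitE, Equiv.coe_fn_mk, insI_self, insI_ne]
  ring

lemma SS_congr {R : Type} [CommRing R] [Algebra ℝ R] (X : ((n : Fin N) → Fin (I n)) → ℝ)
    {P P' : (n : Fin N) → Matrix (Fin (I n)) (Fin (I n)) R} (n : Fin N)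
    (h : ∀ m, m ≠ n → P m = P' m) : SS X P n = SS X P' n := by
  ext j j'
  simp only [SS]
  refine Finset.sum_congr rfl fun idx _ => Finset.sum_congr rfl fun idx' _ => ?_
  congr 1
  exact Finset.prod_congr rfl fun m _ => by rw [h m.1 m.2]

lemma SS_symm {R : Type} [CommRing R] [Algebra ℝ R] (X : ((n : Fin N) → Fin (I n)) → ℝ)
    {P : (n : Fin N) → Matrix (Fin (I n)) (Fin (I n)) R} (n : Fin N)
    (h : ∀ m, (P m)ᵀ = P m) : (SS X P n)ᵀ = SS X P n := by
  ext j j'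
  simp only [SS, transpose_apply]
  rw [Finset.sum_comm]
  refine Finset.sum_congr rfl fun idx _ => Finset.sum_congr rfl fun idx' _ => ?_
  rw [mul_comm (X _)]
  congr 1
  refine Finset.prod_congr rfl fun m _ => ?_
  conv_rhs => rw [← h m.1, transpose_apply]

lemma FF_tr (X : ((n : Fin N) → Fin (I n)) → ℝ)
    {P : (n : Fin N) → Matrix (Fin (I n)) (Fin (I n)) ℝ} (n : Fin N)
    (h : ∀ m, (P m)ᵀ = P m) : FF X P = trace (P n * SS X P n) := by
  conv_rhs => rw [← SS_symm X n h]
  rw [FF_eq X P n]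
  simp [trace, Matrix.mul_apply]

lemma Gmat_mul {r : Fin N → ℕ} (X : ((n : Fin N) → Fin (I n)) → ℝ)
    (A : (n : Fin N) → Matrix (Fin (I n)) (Fin (r n)) ℝ) (n : Fin N) :
    Gmat X A n * (Gmat X A n)ᵀ = SS X (fun n => A n * (A n)ᵀ) n := by
  ext j j'
  have hG : ∀ j c, Gmat X A n j c = ∑ idx, X (insI n j idx) * ∏ m : {m : Fin N // m ≠ n}, A m.1 (idx m) (c m) :=
    fun j c => rfl
  simp only [Matrix.mul_apply, transpose_apply, hG, SS, Algebra.algebraMap_self, RingHom.id_apply]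
  simp only [Finset.sum_mul_sum]
  simp only [Finset.prod_univ_sum, Fintype.piFinset_univ, Finset.mul_sum]
  rw [Finset.sum_comm]
  refine Finset.sum_congr rfl fun idx _ => ?_
  rw [Finset.sum_comm]
  refine Finset.sum_congr rfl fun idx' _ => Finset.sum_congr rfl fun c _ => ?_
  rw [Finset.prod_mul_distrib]
  ring

lemma froSq_eq {r : Fin N → ℕ} (X : ((n : Fin N) → Fin (I n)) → ℝ)
    (A : (n : Fin N) → Matrix (Fin (I n)) (Fin (r n)) ℝ) (n : Fin N)
    (B : Matrix (Fin (I n)) (Fin (r n)) ℝ) :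
    froSq (Bᵀ * Gmat X A n) = trace (B * Bᵀ * SS X (fun n => A n * (A n)ᵀ) n) := by
  have h : froSq (Bᵀ * Gmat X A n) = trace ((Bᵀ * Gmat X A n) * (Bᵀ * Gmat X A n)ᵀ) := by
    simp only [froSq, trace, diag, Matrix.mul_apply (M := Bᵀ * Gmat X A n), transpose_apply, sq]
  rw [h, transpose_mul, transpose_transpose, Matrix.mul_assoc, ← Matrix.mul_assoc (Gmat X A n), Gmat_mul,
    ← Matrix.mul_assoc, Matrix.trace_mul_comm, ← Matrix.mul_assoc]

lemma prod_diff_le {α : Type} (s : Finset α) (a b : α → ℝ) (ha : ∀ i ∈ s, |a i| ≤ 1)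
    (hb : ∀ i ∈ s, |b i| ≤ 1) : |∏ i ∈ s, a i - ∏ i ∈ s, b i| ≤ ∑ i ∈ s, |a i - b i| := by
  classical
  induction s using Finset.induction_on with
  | empty => simp
  | insert x s hx ih =>
    rw [Finset.prod_insert hx, Finset.prod_insert hx, Finset.sum_insert hx]
    have h1 := ih (fun i hi => ha i (Finset.mem_insert_of_mem hi)) (fun i hi => hb i (Finset.mem_insert_of_mem hi))
    have h2 : |∏ i ∈ s, a i| ≤ 1 := by
      rw [Finset.abs_prod]
      exact Finset.prod_le_one (fun _ _ => abs_nonneg _) (fun i hi => ha i (Finset.mem_insert_of_mem hi))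
    have h3 := hb x (Finset.mem_insert_self _ _)
    have e : a x * ∏ i ∈ s, a i - b x * ∏ i ∈ s, b i =
        (a x - b x) * ∏ i ∈ s, a i + b x * (∏ i ∈ s, a i - ∏ i ∈ s, b i) := by ring
    rw [e]
    refine (abs_add_le _ _).trans ?_
    rw [abs_mul, abs_mul]
    have h4 := mul_le_mul_of_nonneg_left h2 (abs_nonneg (a x - b x))
    have h5 := mul_le_mul h3 h1 (abs_nonneg _) zero_le_one
    linarith

open scoped Matrix.Norms.Frobenius in
lemma SS_lip (X : ((n : Fin N) → Fin (I n)) → ℝ) (n : Fin N) :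
    ∃ L : ℝ, 0 ≤ L ∧ ∀ P P' : (n : Fin N) → Matrix (Fin (I n)) (Fin (I n)) ℝ,
      (∀ n, IsPr (P n)) → (∀ n, IsPr (P' n)) → ‖SS X P n - SS X P' n‖ ≤ L * dist P P' := by
  refine ⟨∑ j, ∑ j', ∑ idx, ∑ idx', |X (insI n j idx) * X (insI n j' idx')| * N, by positivity, ?_⟩
  intro P P' hP hP'
  refine (fnorm_le_sum _).trans ?_
  simp only [Finset.sum_mul]
  refine Finset.sum_le_sum fun j _ => Finset.sum_le_sum fun j' _ => ?_
  simp only [Matrix.sub_apply, SS, ← Finset.sum_sub_distrib, ← mul_sub]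
  refine (Finset.abs_sum_le_sum_abs _ _).trans (Finset.sum_le_sum fun idx _ => ?_)
  refine (Finset.abs_sum_le_sum_abs _ _).trans (Finset.sum_le_sum fun idx' _ => ?_)
  rw [abs_mul, mul_assoc]
  refine mul_le_mul_of_nonneg_left ?_ (abs_nonneg _)
  refine (prod_diff_le _ _ _ (fun i _ => (hP i.1).entry_le _ _) (fun i _ => (hP' i.1).entry_le _ _)).trans ?_
  have : ∀ m ∈ (Finset.univ : Finset {m : Fin N // m ≠ n}),
      |P m.1 (idx m) (idx' m) - P' m.1 (idx m) (idx' m)| ≤ dist P P' := by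
    intro m _
    refine (abs_entry_le (P m.1 - P' m.1) (idx m) (idx' m)).trans ?_
    rw [← dist_eq_norm]
    exact dist_le_pi_dist P P' m.1
  refine (Finset.sum_le_card_nsmul _ _ _ this).trans ?_
  rw [nsmul_eq_mul]
  refine mul_le_mul_of_nonneg_right ?_ dist_nonneg
  have hc : Fintype.card {m : Fin N // m ≠ n} ≤ Fintype.card (Fin N) := Fintype.card_subtype_le _
  rw [Fintype.card_fin] at hc
  exact_mod_cast hc

end Tensor



section Grad
open Matrix

variable {N : ℕ} {I : Fin N → ℕ}

/-- variables of the matrix polynomial ring -/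
abbrev VarT (I : Fin N → ℕ) : Type := (n : Fin N) × (Fin (I n) × Fin (I n))

noncomputable def Xm (n : Fin N) : Matrix (Fin (I n)) (Fin (I n)) (MvPolynomial (VarT I) ℝ) :=
  fun a b => MvPolynomial.X ⟨n, (a, b)⟩

noncomputable def psiM {R : Type} [CommRing R] {ι : Type} [Fintype ι] (M : Matrix ι ι R) : Matrix ι ι R :=
  (M * M + M * M + M * M) - (M * M * M + M * M * M)

noncomputable def gpoly (X : ((n : Fin N) → Fin (I n)) → ℝ) : MvPolynomial (VarT I) ℝ :=
  FF X (fun n => psiM (Xm n))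

def ptOf (P : (n : Fin N) → Matrix (Fin (I n)) (Fin (I n)) ℝ) : VarT I → ℝ :=
  fun v => P v.1 v.2.1 v.2.2

lemma Xm_eval (P : (n : Fin N) → Matrix (Fin (I n)) (Fin (I n)) ℝ) (n : Fin N) :
    (MvPolynomial.eval (ptOf P)).mapMatrix (Xm n) = P n := by
  ext a b
  simp [Xm, ptOf]

lemma psiM_map {R R' : Type} [CommRing R] [CommRing R'] {ι : Type} [Fintype ι] [DecidableEq ι] (f : R →+* R')
    (M : Matrix ι ι R) : f.mapMatrix (psiM M) = psiM (f.mapMatrix M) := by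
  simp only [psiM, map_sub, map_add, map_mul]

lemma psiM_pr {ι : Type} [Fintype ι] {P : Matrix ι ι ℝ} (h : IsPr P) : psiM P = P := by
  simp only [psiM, h.2]; abel

lemma psi_eval {P : (n : Fin N) → Matrix (Fin (I n)) (Fin (I n)) ℝ} (h : ∀ n, IsPr (P n)) (n : Fin N)
    (a b : Fin (I n)) : MvPolynomial.eval (ptOf P) (psiM (Xm n) a b) = P n a b := by
  have := psiM_map (MvPolynomial.eval (ptOf P)) (Xm n)
  rw [Xm_eval, psiM_pr (h n)] at this
  exact congrFun (congrFun this a) b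

lemma gpoly_eval (X : ((n : Fin N) → Fin (I n)) → ℝ)
    {P : (n : Fin N) → Matrix (Fin (I n)) (Fin (I n)) ℝ} (h : ∀ n, IsPr (P n)) :
    MvPolynomial.eval (ptOf P) (gpoly X) = FF X P := by
  simp only [gpoly, FF, map_sum, map_mul, map_prod, psi_eval h, MvPolynomial.algebraMap_eq,
    MvPolynomial.eval_C, Algebra.algebraMap_self, RingHom.id_apply]

lemma SS_eval (X : ((n : Fin N) → Fin (I n)) → ℝ)
    {P : (n : Fin N) → Matrix (Fin (I n)) (Fin (I n)) ℝ} (h : ∀ n, IsPr (P n)) (n : Fin N)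
    (j j' : Fin (I n)) :
    MvPolynomial.eval (ptOf P) (SS X (fun n => psiM (Xm n)) n j j') = SS X P n j j' := by
  simp only [SS, map_sum, map_mul, map_prod, psi_eval h, MvPolynomial.algebraMap_eq,
    MvPolynomial.eval_C, Algebra.algebraMap_self, RingHom.id_apply]

lemma der_mul {R : Type} [CommRing R] [Algebra ℝ R] (D : Derivation ℝ R R) {ι : Type} [Fintype ι]
    (A B : Matrix ι ι R) : (A * B).map D = A.map D * B + A * B.map D := by
  ext i j
  simp only [Matrix.map_apply, Matrix.mul_apply, Matrix.add_apply, map_sum, Derivation.leibniz,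
    Finset.sum_add_distrib, smul_eq_mul]
  rw [add_comm]
  congr 1
  exact Finset.sum_congr rfl fun k _ => mul_comm _ _

lemma der_psi {R : Type} [CommRing R] [Algebra ℝ R] (D : Derivation ℝ R R) {ι : Type} [Fintype ι]
    (A : Matrix ι ι R) : (psiM A).map D =
      ((A.map D * A + A * A.map D) + (A.map D * A + A * A.map D) + (A.map D * A + A * A.map D))
      - (((A.map D * A + A * A.map D) * A + A * A * A.map D) + ((A.map D * A + A * A.map D) * A + A * A * A.map D)) := by
  have hadd : ∀ A B : Matrix ι ι R, (A + B).map D = A.map D + B.map D := fun A B => by ext; simp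
  have hsub : ∀ A B : Matrix ι ι R, (A - B).map D = A.map D - B.map D := fun A B => by ext; simp
  simp only [psiM, hadd, hsub, der_mul]

lemma der_prod_zero {R : Type} [CommRing R] [Algebra ℝ R] (D : Derivation ℝ R R) {α : Type} (s : Finset α)
    (f : α → R) (h : ∀ i ∈ s, D (f i) = 0) : D (∏ i ∈ s, f i) = 0 := by
  classical
  induction s using Finset.induction_on with
  | empty => simp
  | insert x s hx ih =>
    rw [Finset.prod_insert hx, Derivation.leibniz, h x (Finset.mem_insert_self _ _),
      ih (fun i hi => h i (Finset.mem_insert_of_mem hi))]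
    simp

lemma Xm_der_self (n : Fin N) (a b : Fin (I n)) :
    (Xm (I := I) n).map (MvPolynomial.pderiv (R := ℝ) (⟨n, (a, b)⟩ : VarT I)) = Matrix.single a b 1 := by
  ext c d
  simp only [Matrix.map_apply, Xm, MvPolynomial.pderiv_X, Matrix.single_apply, Pi.single_apply]
  congr 1
  simp [Prod.ext_iff, eq_comm]

lemma Xm_der_ne (n m : Fin N) (hm : m ≠ n) (a b : Fin (I n)) :
    (Xm (I := I) m).map (MvPolynomial.pderiv (R := ℝ) (⟨n, (a, b)⟩ : VarT I)) = 0 := by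
  ext c d
  simp only [Matrix.map_apply, Xm, MvPolynomial.pderiv_X, Pi.single_apply]
  rw [if_neg]
  · simp
  · intro h
    exact hm (congrArg Sigma.fst h)

lemma SS_der (X : ((n : Fin N) → Fin (I n)) → ℝ) (n : Fin N) (a b j j' : Fin (I n)) :
    MvPolynomial.pderiv (R := ℝ) (⟨n, (a, b)⟩ : VarT I) (SS X (fun n => psiM (Xm n)) n j j') = 0 := by
  simp only [SS, map_sum]
  refine Finset.sum_eq_zero fun idx _ => Finset.sum_eq_zero fun idx' _ => ?_
  rw [Derivation.leibniz, der_prod_zero]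
  · simp [MvPolynomial.algebraMap_eq]
  · intro m _
    have h := der_psi (MvPolynomial.pderiv (R := ℝ) (⟨n, (a, b)⟩ : VarT I)) (Xm m.1)
    rw [Xm_der_ne n m.1 m.2] at h
    have := congrFun (congrFun h (idx m)) (idx' m)
    simpa using this

lemma gpoly_grad (X : ((n : Fin N) → Fin (I n)) → ℝ)
    {P : (n : Fin N) → Matrix (Fin (I n)) (Fin (I n)) ℝ} (h : ∀ n, IsPr (P n)) (n : Fin N)
    (a b : Fin (I n)) :
    MvPolynomial.eval (ptOf P) (MvPolynomial.pderiv ⟨n, (a, b)⟩ (gpoly X)) =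
      (P n * SS X P n + SS X P n * P n - (P n * SS X P n * P n + P n * SS X P n * P n)) b a := by
  have h1 : MvPolynomial.pderiv (⟨n, (a, b)⟩ : VarT I) (gpoly X) = ∑ j, ∑ j',
      ((psiM (Xm n)).map (MvPolynomial.pderiv (R := ℝ) (⟨n, (a, b)⟩ : VarT I))) j j' *
        SS X (fun n => psiM (Xm n)) n j j' := by
    rw [gpoly, FF_eq X _ n]
    simp only [map_sum, Derivation.leibniz, SS_der, smul_zero, zero_add, smul_eq_mul, Matrix.map_apply]
    refine Finset.sum_congr rfl fun j _ => Finset.sum_congr rfl fun j' _ => by ring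
  set ev := MvPolynomial.eval (ptOf P) with hev
  set E : Matrix (Fin (I n)) (Fin (I n)) ℝ := Matrix.single a b 1 with hE
  have h2 : ev.mapMatrix ((psiM (Xm n)).map (MvPolynomial.pderiv (R := ℝ) (⟨n, (a, b)⟩ : VarT I))) =
      E * P n + P n * E - (P n * E * P n + P n * E * P n) := by
    rw [der_psi, Xm_der_self]
    simp only [map_sub, map_add, map_mul]
    rw [Xm_eval]
    have : ev.mapMatrix (Matrix.single a b 1) = E := by
      ext c d
      simp [hE, Matrix.single_apply, apply_ite]
    rw [this]
    have hp := (h n).2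
    have e1 : (E * P n + P n * E) * P n + P n * P n * E = E * (P n * P n) + P n * E * P n + P n * P n * E := by
      noncomm_ring
    rw [e1, hp]; abel
  have h3 : ∀ j j', ev (((psiM (Xm n)).map (MvPolynomial.pderiv (R := ℝ) (⟨n, (a, b)⟩ : VarT I))) j j') =
      (E * P n + P n * E - (P n * E * P n + P n * E * P n)) j j' := fun j j' =>
    congrFun (congrFun h2 j) j'
  have hsym := SS_symm X n (fun m => (h m).1)
  rw [h1]
  simp only [map_sum, map_mul, h3]
  have h4 : ∀ j j', ev (SS X (fun n => psiM (Xm n)) n j j') = SS X P n j j' := SS_eval X h n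
  simp only [h4]
  set S := SS X P n
  have h5 : ∀ M : Matrix (Fin (I n)) (Fin (I n)) ℝ, ∑ j, ∑ j', M j j' * S j j' = trace (M * S) := by
    intro M
    conv_rhs => rw [← hsym]
    simp [trace, Matrix.mul_apply]
  rw [h5]
  have h6 : ∀ M : Matrix (Fin (I n)) (Fin (I n)) ℝ, M b a = trace (E * M) := by
    intro M
    simp [hE, trace, Matrix.mul_apply, Matrix.single_apply, ite_and]
  refine Eq.trans ?_ (h6 _).symm
  set p := P n
  have cyc : ∀ A B : Matrix (Fin (I n)) (Fin (I n)) ℝ, trace (A * B) = trace (B * A) := Matrix.trace_mul_comm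
  have t1 : trace (p * E * S) = trace (E * (S * p)) := by
    rw [Matrix.mul_assoc, cyc, Matrix.mul_assoc]
  have t2 : trace (p * E * p * S) = trace (E * (p * S * p)) := by
    rw [Matrix.mul_assoc, Matrix.mul_assoc, cyc, Matrix.mul_assoc]
  simp only [Matrix.sub_mul, Matrix.add_mul, Matrix.mul_sub, Matrix.mul_add, trace_sub, trace_add, t1, t2]
  simp only [Matrix.mul_assoc]

end Grad



section Proj
open Matrix
open scoped Matrix.Norms.Frobenius

/-- gap data with respect to a given projector -/
def GapP {ι : Type} [Fintype ι] [DecidableEq ι] (Q S : Matrix ι ι ℝ) (l u : ℝ) : Prop :=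
  u < l ∧ Q * S = S * Q ∧
    (∀ v, Q *ᵥ v = v → l * (v ⬝ᵥ v) ≤ v ⬝ᵥ S *ᵥ v) ∧
    (∀ v, (1 - Q) *ᵥ v = v → v ⬝ᵥ S *ᵥ v ≤ u * (v ⬝ᵥ v))

lemma gapP_of_max {ι : Type} [Fintype ι] [DecidableEq ι] {r : ℕ} {P S : Matrix ι ι ℝ}
    (hg : GapAt r S) (hP : GrP r P) (hmax : ∀ Q, GrP r Q → trace (Q * S) ≤ trace (P * S)) :
    ∃ l u, GapP P S l u := by
  obtain ⟨Q, l, u, hQ, hlu, hc, h1, h2⟩ := hg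
  have h := growth hQ.isPr hP.isPr (by rw [hQ.tr, hP.tr]) hc h1 h2
  have h3 := hmax Q hQ
  have h4 : ‖P - Q‖ ^ 2 ≤ 0 := by
    have : 0 < (l - u) / 2 := by linarith
    by_contra h5
    push Not at h5
    have := mul_pos this h5
    linarith
  have h5 : P = Q := by
    have : ‖P - Q‖ = 0 := pow_eq_zero_iff (two_ne_zero) |>.mp (le_antisymm h4 (sq_nonneg _))
    exact sub_eq_zero.mp (norm_eq_zero.mp this)
  subst h5
  exact ⟨l, u, hlu, hc, h1, h2⟩

lemma contr {ι : Type} [Fintype ι] [DecidableEq ι] {r : ℕ} {P P' S S' : Matrix ι ι ℝ} {l u : ℝ}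
    (hg : GapP P S l u) (hP : GrP r P) (hP' : GrP r P')
    (hmax : ∀ Q, GrP r Q → trace (Q * S') ≤ trace (P' * S')) :
    ‖P' - P‖ ≤ 2 / (l - u) * ‖S' - S‖ := by
  obtain ⟨hlu, hc, h1, h2⟩ := hg
  have h := growth hP.isPr hP'.isPr (by rw [hP'.tr, hP.tr]) hc h1 h2
  have h3 := hmax P hP
  have h4 : trace ((P' - P) * (S' - S)) = trace (P' * S') - trace (P * S') + (trace (P * S) - trace (P' * S)) := by
    simp only [Matrix.sub_mul, Matrix.mul_sub, trace_sub]; ring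
  have h5 := (le_abs_self _).trans (trace_mul_le (P' - P) (S' - S))
  have hp : 0 < l - u := by linarith
  have h6 : (l - u) / 2 * ‖P' - P‖ ^ 2 ≤ ‖P' - P‖ * ‖S' - S‖ := by linarith
  rw [div_mul_eq_mul_div, le_div_iff₀ hp]
  rcases (norm_nonneg (P' - P)).eq_or_lt with h7 | h7
  · rw [← h7]; simp
  · have : ‖P' - P‖ * ((l - u) / 2 * ‖P' - P‖) ≤ ‖P' - P‖ * ‖S' - S‖ := by linarith
    have := le_of_mul_le_mul_left this h7
    linarith

lemma suff_inc {ι : Type} [Fintype ι] [DecidableEq ι] {r : ℕ} {P S : Matrix ι ι ℝ} {l u : ℝ}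
    (hg : GapP P S l u) (hP : GrP r P) :
    ∃ ε > 0, ∃ c > 0, ∀ P' P0 S' : Matrix ι ι ℝ, GrP r P' → GrP r P0 → S'ᵀ = S' →
      (∀ Q, GrP r Q → trace (Q * S') ≤ trace (P' * S')) → ‖P' - P‖ < ε → ‖S' - S‖ < ε →
      c * ‖P0 - P'‖ ^ 2 ≤ trace (P' * S') - trace (P0 * S') := by
  obtain ⟨hlu, hc, h1, h2⟩ := hg
  obtain ⟨e1, he1, H1⟩ := pert hP.isPr (l := l) (l' := (2 * l + u) / 3) (by linarith) h1
  obtain ⟨e2, he2, H2⟩ := pert (Q := 1 - P) (S := -S) hP.isPr.one_sub (l := -u) (l' := -((l + 2 * u) / 3))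
    (by linarith) (by
      intro v hv
      have := h2 v hv
      rw [Matrix.neg_mulVec, dotProduct_neg]; linarith)
  refine ⟨min e1 e2, lt_min he1 he2, ((2 * l + u) / 3 - (l + 2 * u) / 3) / 2, by linarith, ?_⟩
  intro P' P0 S' hP' hP0 hS' hmax hd1 hd2
  refine growth hP'.isPr hP0.isPr (by rw [hP'.tr, hP0.tr]) (max_commute hP' hS' hmax) ?_ ?_
  · exact H1 P' S' hP'.isPr (hd1.trans_le (min_le_left _ _)) (hd2.trans_le (min_le_left _ _))
  · intro v hv
    have := H2 (1 - P') (-S') hP'.isPr.one_sub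
      (by rw [sub_sub_sub_cancel_left, norm_sub_rev]; exact hd1.trans_le (min_le_right _ _))
      (by rw [neg_sub_neg, norm_sub_rev]; exact hd2.trans_le (min_le_right _ _)) v hv
    rw [Matrix.neg_mulVec, dotProduct_neg] at this; linarith

variable {N : ℕ} {I : Fin N → ℕ}

/-- tuples of square matrices -/
abbrev Tup (I : Fin N → ℕ) : Type := (n : Fin N) → Matrix (Fin (I n)) (Fin (I n)) ℝ

/-- hybrid tuples -/
def hyP (P P' : Tup I) (j : ℕ) : Tup I := fun i => if i.val < j then P' i else P i

/-- one projector sweep -/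
def StepH (r : Fin N → ℕ) (X : ((n : Fin N) → Fin (I n)) → ℝ) (P P' : Tup I) : Prop :=
  ∀ n, ∀ Q, GrP (r n) Q →
    trace (Q * SS X (hyP P P' n.val) n) ≤ trace (P' n * SS X (hyP P P' n.val) n)

lemma hyP_zero (P P' : Tup I) : hyP P P' 0 = P := by funext i; simp [hyP]
lemma hyP_N (P P' : Tup I) : hyP P P' N = P' := by funext i; simp [hyP]
lemma hyP_self (P P' : Tup I) (n : Fin N) : hyP P P' n.val n = P n := by simp [hyP]
lemma hyP_succ_self (P P' : Tup I) (n : Fin N) : hyP P P' (n.val + 1) n = P' n := by simp [hyP]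
lemma hyP_succ_ne (P P' : Tup I) (n m : Fin N) (h : m ≠ n) :
    hyP P P' (n.val + 1) m = hyP P P' n.val m := by
  have : m.val ≠ n.val := fun h' => h (Fin.ext h')
  simp only [hyP]
  congr 1
  simp only [eq_iff_iff]; omega

lemma hyP_GrP {r : Fin N → ℕ} {P P' : Tup I} (h : ∀ n, GrP (r n) (P n)) (h' : ∀ n, GrP (r n) (P' n)) (j : ℕ)
    (n : Fin N) : GrP (r n) (hyP P P' j n) := by
  simp only [hyP]; split_ifs
  · exact h' n
  · exact h n

lemma FF_hyP {r : Fin N → ℕ} (X : ((n : Fin N) → Fin (I n)) → ℝ) {P P' : Tup I} (h : ∀ n, GrP (r n) (P n))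
    (h' : ∀ n, GrP (r n) (P' n)) (n : Fin N) :
    FF X (hyP P P' n.val) = trace (P n * SS X (hyP P P' n.val) n) := by
  rw [FF_tr X n (fun m => (hyP_GrP h h' _ m).isPr.1), hyP_self]

lemma FF_hyP_succ {r : Fin N → ℕ} (X : ((n : Fin N) → Fin (I n)) → ℝ) {P P' : Tup I} (h : ∀ n, GrP (r n) (P n))
    (h' : ∀ n, GrP (r n) (P' n)) (n : Fin N) :
    FF X (hyP P P' (n.val + 1)) = trace (P' n * SS X (hyP P P' n.val) n) := by
  rw [FF_tr X n (fun m => (hyP_GrP h h' _ m).isPr.1), hyP_succ_self,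
    SS_congr X n (fun m hm => hyP_succ_ne P P' n m hm)]

lemma FF_mono {r : Fin N → ℕ} {X : ((n : Fin N) → Fin (I n)) → ℝ} {P P' : Tup I} (h : ∀ n, GrP (r n) (P n))
    (h' : ∀ n, GrP (r n) (P' n)) (hs : StepH r X P P') : Monotone fun j => FF X (hyP P P' j) := by
  refine monotone_nat_of_le_succ fun j => ?_
  by_cases hj : j < N
  · have e1 := FF_hyP X h h' ⟨j, hj⟩
    have e2 := FF_hyP_succ X h h' ⟨j, hj⟩
    have := hs ⟨j, hj⟩ _ (h ⟨j, hj⟩)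
    simp only at e1 e2 this
    rw [e1, e2]; exact this
  · have : hyP P P' (j + 1) = hyP P P' j := by
      funext i
      have := i.2
      simp only [hyP]
      rw [if_pos (by omega), if_pos (by omega)]
    rw [this]

lemma FF_cont (X : ((n : Fin N) → Fin (I n)) → ℝ) : Continuous fun P : Tup I => FF X P := by
  unfold FF
  refine continuous_finset_sum _ fun idx _ => continuous_finset_sum _ fun idx' _ => ?_
  refine continuous_const.mul (continuous_finset_prod _ fun n _ => ?_)
  have h1 : Continuous fun P : Tup I => P n := continuous_apply n
  have h2 : Continuous fun M : Matrix (Fin (I n)) (Fin (I n)) ℝ => M (idx n) (idx' n) := by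
    refine continuous_iff_continuousAt.mpr fun M => ?_
    refine tendsto_iff_dist_tendsto_zero.mpr ?_
    refine squeeze_zero (fun _ => dist_nonneg) (fun M' => ?_) (tendsto_iff_dist_tendsto_zero.mp Filter.tendsto_id)
    rw [Real.dist_eq, dist_eq_norm]
    exact abs_entry_le (M' - M) _ _
  exact h2.comp h1

lemma hyP_dist_le (P P' Q : Tup I) (j : ℕ) : dist (hyP P P' j) P' ≤ dist P P' := by
  rw [dist_pi_le_iff dist_nonneg]
  intro n
  simp only [hyP]; split_ifs
  · simp
  · exact dist_le_pi_dist P P' n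

lemma step_dist {P P' B : Tup I} {n : Fin N} {M : ℝ} (hM : 1 ≤ M)
    (hb : ‖P' n - B n‖ ≤ M * dist (hyP P P' n.val) B) :
    dist (hyP P P' (n.val + 1)) B ≤ M * dist (hyP P P' n.val) B := by
  rw [dist_pi_le_iff (by positivity)]
  intro m
  by_cases h : m = n
  · subst h; rw [hyP_succ_self, dist_eq_norm]; exact hb
  · rw [hyP_succ_ne _ _ _ _ h]
    have := dist_le_pi_dist (hyP P P' n.val) B m
    have h2 : 0 ≤ dist (hyP P P' n.val) B := dist_nonneg
    nlinarith

end Proj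



section MainProj
open Matrix Filter
open scoped Matrix.Norms.Frobenius

variable {N : ℕ} {I : Fin N → ℕ}

lemma comm_entry_bound {ι : Type} [Fintype ι] [DecidableEq ι] {r : ℕ} {P S S' : Matrix ι ι ℝ}
    (hP : GrP r P) (hc : P * S' = S' * P) (b a : ι) :
    |(P * S + S * P - (P * S * P + P * S * P)) b a| ≤
      (2 * ((r : ℝ) + 1) + 2 * ((r : ℝ) + 1) ^ 2) * ‖S - S'‖ := by
  refine (abs_entry_le _ b a).trans ?_
  have h0 : P * S' * P = P * S' := by rw [hc, Matrix.mul_assoc, hP.isPr.2]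
  have e : P * S + S * P - (P * S * P + P * S * P) =
      P * (S - S') + (S - S') * P - (P * (S - S') * P + P * (S - S') * P) := by
    simp only [Matrix.mul_sub, Matrix.sub_mul, h0, ← hc]
    abel
  rw [e]
  set D := S - S'
  have hp : ‖P‖ ≤ (r : ℝ) + 1 := by
    have h1 := hP.norm_sq
    have h2 : (0 : ℝ) ≤ r := Nat.cast_nonneg r
    nlinarith [norm_nonneg P]
  have n0 := norm_nonneg D
  have n1 := norm_nonneg P
  have a1 : ‖P * D‖ ≤ ((r : ℝ) + 1) * ‖D‖ :=
    (Matrix.frobenius_norm_mul P D).trans (mul_le_mul_of_nonneg_right hp n0)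
  have a2 : ‖D * P‖ ≤ ((r : ℝ) + 1) * ‖D‖ := by
    refine (Matrix.frobenius_norm_mul D P).trans ?_
    rw [mul_comm]; exact mul_le_mul_of_nonneg_right hp n0
  have a3 : ‖P * D * P‖ ≤ ((r : ℝ) + 1) ^ 2 * ‖D‖ := by
    refine (Matrix.frobenius_norm_mul (P * D) P).trans ?_
    have := mul_le_mul a1 hp n1 (by positivity)
    linarith
  have b1 := norm_sub_le (P * D + D * P) (P * D * P + P * D * P)
  have b2 := norm_add_le (P * D) (D * P)
  have b3 := norm_add_le (P * D * P) (P * D * P)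
  linarith

lemma grad_bound (r : Fin N → ℕ) (X : ((n : Fin N) → Fin (I n)) → ℝ) :
    ∃ C : ℝ, 0 ≤ C ∧ ∀ P P' : Tup I, (∀ n, GrP (r n) (P n)) → (∀ n, GrP (r n) (P' n)) → StepH r X P P' →
      ∑ v, |MvPolynomial.eval (ptOf P') (MvPolynomial.pderiv v (gpoly X))| ≤ C * dist P' P := by
  choose L hL0 hL using fun n => SS_lip X n
  refine ⟨∑ v : VarT I, (2 * ((r v.1 : ℝ) + 1) + 2 * ((r v.1 : ℝ) + 1) ^ 2) * L v.1,
    Finset.sum_nonneg fun v _ => mul_nonneg (by positivity) (hL0 _), ?_⟩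
  intro P P' hP hP' hs
  rw [Finset.sum_mul]
  refine Finset.sum_le_sum fun v _ => ?_
  obtain ⟨n, a, b⟩ := v
  rw [gpoly_grad X (fun n => (hP' n).isPr) n a b]
  have hH := hyP_GrP hP hP' n.val
  have hc := max_commute (hP' n) (SS_symm X n (fun m => (hH m).isPr.1)) (hs n)
  refine (comm_entry_bound (hP' n) hc b a).trans ?_
  rw [mul_assoc]
  refine mul_le_mul_of_nonneg_left ?_ (by positivity)
  refine (hL n P' _ (fun n => (hP' n).isPr) (fun n => (hH n).isPr)).trans ?_
  refine mul_le_mul_of_nonneg_left ?_ (hL0 n)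
  rw [dist_comm, dist_comm P']
  exact hyP_dist_le P P' P _

theorem main_proj (r : Fin N → ℕ) (X : ((n : Fin N) → Fin (I n)) → ℝ) (P : ℕ → Tup I)
    (hP : ∀ k n, GrP (r n) (P k n)) (hs : ∀ k, StepH r X (P k) (P (k + 1)))
    (B : Tup I) (hB : ∀ n, GrP (r n) (B n)) (φ : ℕ → ℕ) (hφ : StrictMono φ)
    (hlim : Tendsto (fun k => P (φ k)) atTop (nhds B)) (hgap : ∀ n, GapAt (r n) (SS X B n)) :
    (∀ n, ∀ Q, GrP (r n) Q → trace (Q * SS X B n) ≤ trace (B n * SS X B n)) ∧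
    Tendsto P atTop (nhds B) := by
  choose L hL0 hL using fun n => SS_lip X n
  have hBp : ∀ n, IsPr (B n) := fun n => (hB n).isPr
  have hHp : ∀ k j n, IsPr (hyP (P k) (P (k + 1)) j n) := fun k j n => (hyP_GrP (hP k) (hP (k + 1)) j n).isPr
  have hmon : Monotone fun k => FF X (P k) := by
    refine monotone_nat_of_le_succ fun k => ?_
    have := FF_mono (hP k) (hP (k + 1)) (hs k) (Nat.zero_le N)
    simpa only [hyP_zero, hyP_N] using this
  have hsub : Tendsto (fun k => FF X (P (φ k))) atTop (nhds (FF X B)) :=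
    ((FF_cont X).tendsto B).comp hlim
  have hFt : Tendsto (fun k => FF X (P k)) atTop (nhds (FF X B)) :=
    (tendsto_iff_tendsto_subseq_of_monotone hmon hφ.tendsto_atTop).mpr hsub
  have hle : ∀ k, FF X (P k) ≤ FF X B := fun k => hmon.ge_of_tendsto hFt k
  -- local bound
  have hloc : ∀ n, (∀ Q, GrP (r n) Q → trace (Q * SS X B n) ≤ trace (B n * SS X B n)) →
      ∃ M : ℝ, 1 ≤ M ∧ ∀ k, dist (hyP (P k) (P (k + 1)) (n.val + 1)) B ≤ M * dist (hyP (P k) (P (k + 1)) n.val) B := by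
    intro n hn
    obtain ⟨l, u, hg⟩ := gapP_of_max (hgap n) (hB n) hn
    have hlu : 0 < l - u := by linarith [hg.1]
    have hq : 0 ≤ 2 / (l - u) * L n := mul_nonneg (by positivity) (hL0 n)
    refine ⟨1 + 2 / (l - u) * L n, by linarith, fun k => ?_⟩
    refine step_dist (by linarith) ?_
    have h1 := contr hg (hB n) (hP (k + 1) n) (hs k n)
    have h2 := hL n _ B (hHp k n.val) hBp
    have h3 : 2 / (l - u) * ‖SS X (hyP (P k) (P (k + 1)) n.val) n - SS X B n‖ ≤
      2 / (l - u) * (L n * dist (hyP (P k) (P (k + 1)) n.val) B) := mul_le_mul_of_nonneg_left h2 (by positivity)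
    have h4 : 0 ≤ dist (hyP (P k) (P (k + 1)) n.val) B := dist_nonneg
    linarith
  have hbm : ∀ j, j ≤ N → (∀ n : Fin N, n.val < j → ∀ Q, GrP (r n) Q → trace (Q * SS X B n) ≤ trace (B n * SS X B n)) ∧
      Tendsto (fun k => hyP (P (φ k)) (P (φ k + 1)) j) atTop (nhds B) := by
    intro j
    induction j with
    | zero =>
      intro _
      refine ⟨fun n hn => absurd hn (Nat.not_lt_zero _), ?_⟩
      simpa only [hyP_zero] using hlim
    | succ j ih =>
      intro hj
      obtain ⟨ih1, ih2⟩ := ih (by omega)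
      set n : Fin N := ⟨j, hj⟩ with hn
      have ih2d := tendsto_iff_dist_tendsto_zero.mp ih2
      have hS : Tendsto (fun k => ‖SS X (hyP (P (φ k)) (P (φ k + 1)) j) n - SS X B n‖) atTop (nhds 0) := by
        refine squeeze_zero (fun _ => norm_nonneg _) (fun k => hL n _ B (hHp (φ k) j) hBp) ?_
        simpa using ih2d.const_mul (L n)
      have hmaxn : ∀ Q, GrP (r n) Q → trace (Q * SS X B n) ≤ trace (B n * SS X B n) := by
        intro Q hQ
        have e : trace (B n * SS X B n) = FF X B := (FF_tr X n (fun m => (hBp m).1)).symm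
        rw [e]
        have key : ∀ k, trace (Q * SS X B n) ≤
            FF X B + ‖Q‖ * ‖SS X (hyP (P (φ k)) (P (φ k + 1)) j) n - SS X B n‖ := by
          intro k
          have h1 := hs (φ k) n Q hQ
          rw [← FF_hyP_succ X (hP (φ k)) (hP (φ k + 1)) n] at h1
          have h2 := FF_mono (hP (φ k)) (hP (φ k + 1)) (hs (φ k)) hj
          simp only [hyP_N] at h2
          have h3 := hle (φ k + 1)
          have h4 := (neg_abs_le _).trans' (neg_le_neg (trace_mul_le Q (SS X (hyP (P (φ k)) (P (φ k + 1)) j) n - SS X B n)))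
          rw [Matrix.mul_sub, trace_sub] at h4
          have h1' : trace (Q * SS X (hyP (P (φ k)) (P (φ k + 1)) j) n) ≤ FF X (hyP (P (φ k)) (P (φ k + 1)) (j + 1)) := h1
          have h2' : FF X (hyP (P (φ k)) (P (φ k + 1)) (j + 1)) ≤ FF X (P (φ k + 1)) := h2
          linarith
        have hT := (hS.const_mul ‖Q‖).const_add (FF X B)
        rw [mul_zero, add_zero] at hT
        exact ge_of_tendsto' hT key
      refine ⟨fun m hm => ?_, ?_⟩
      · rcases Nat.lt_succ_iff_lt_or_eq.mp hm with h | h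
        · exact ih1 m h
        · have : m = n := Fin.ext h
          rw [this]; exact hmaxn
      · obtain ⟨M, hM, hMb⟩ := hloc n hmaxn
        refine tendsto_iff_dist_tendsto_zero.mpr ?_
        refine squeeze_zero (fun _ => dist_nonneg) (fun k => hMb (φ k)) ?_
        simpa using ih2d.const_mul M
  have hBM : ∀ n, ∀ Q, GrP (r n) Q → trace (Q * SS X B n) ≤ trace (B n * SS X B n) :=
    fun n => (hbm N le_rfl).1 n n.2
  refine ⟨hBM, ?_⟩
  -- uniform constants
  choose M0 hM01 hM0 using fun n => hloc n (hBM n)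
  set M : ℝ := 1 + ∑ n, M0 n with hMdef
  have hM0n : ∀ n, M0 n ≤ M := fun n => by
    have := Finset.single_le_sum (f := M0) (fun j _ => zero_le_one.trans (hM01 j)) (Finset.mem_univ n)
    linarith
  have hM1 : 1 ≤ M := by
    have : 0 ≤ ∑ n, M0 n := Finset.sum_nonneg fun j _ => zero_le_one.trans (hM01 j)
    linarith
  have hMj : ∀ k j, j ≤ N → dist (hyP (P k) (P (k + 1)) j) B ≤ M ^ j * dist (P k) B := by
    intro k j
    induction j with
    | zero => intro _; simp [hyP_zero]
    | succ j ih =>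
      intro hj
      have h1 := hM0 ⟨j, hj⟩ k
      have h2 := ih (by omega)
      have h3 : dist (hyP (P k) (P (k + 1)) (j + 1)) B ≤ M0 ⟨j, hj⟩ * dist (hyP (P k) (P (k + 1)) j) B := h1
      have h4 : (0 : ℝ) ≤ dist (hyP (P k) (P (k + 1)) j) B := dist_nonneg
      have h5 := mul_le_mul_of_nonneg_right (hM0n ⟨j, hj⟩) h4
      have h6 := mul_le_mul_of_nonneg_left h2 (zero_le_one.trans hM1)
      calc _ ≤ _ := h3
        _ ≤ _ := h5
        _ ≤ _ := h6
        _ = _ := by ring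
  have hMN : ∀ k j, j ≤ N → dist (hyP (P k) (P (k + 1)) j) B ≤ M ^ N * dist (P k) B := fun k j hj =>
    (hMj k j hj).trans (mul_le_mul_of_nonneg_right (pow_le_pow_right₀ hM1 hj) dist_nonneg)
  have hMNpos : 0 < M ^ N := pow_pos (by linarith) N
  -- sufficient increase
  have hsi : ∀ n, ∃ ε > 0, ∃ c > 0, ∀ P' P0 S' : Matrix (Fin (I n)) (Fin (I n)) ℝ, GrP (r n) P' → GrP (r n) P0 → S'ᵀ = S' →
      (∀ Q, GrP (r n) Q → trace (Q * S') ≤ trace (P' * S')) → ‖P' - B n‖ < ε → ‖S' - SS X B n‖ < ε →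
      c * ‖P0 - P'‖ ^ 2 ≤ trace (P' * S') - trace (P0 * S') := by
    intro n
    obtain ⟨l, u, hg⟩ := gapP_of_max (hgap n) (hB n) (hBM n)
    exact suff_inc hg (hB n)
  choose ε hε c hc hsi using hsi
  obtain ⟨ε0, hε0, hε0n⟩ := fin_min ε hε
  obtain ⟨c0, hc0, hc0n⟩ := fin_min c hc
  set Ls : ℝ := ∑ n, L n with hLs
  have hLsn : ∀ n, L n ≤ Ls := fun n =>
    Finset.single_le_sum (f := L) (fun j _ => hL0 j) (Finset.mem_univ n)
  have hLs0 : 0 ≤ Ls := Finset.sum_nonneg fun j _ => hL0 j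
  set ρ : ℝ := ε0 / ((Ls + 1) * M ^ N) with hρ
  have hρ0 : 0 < ρ := by positivity
  obtain ⟨C', hC'0, hC'⟩ := grad_bound r X
  obtain ⟨m, C, hC, c1, hc1, hloj⟩ := loj (gpoly X - MvPolynomial.C (FF X B)) 1
  have hΔ : Tendsto (fun k => FF X B - FF X (P k)) atTop (nhds 0) := by
    simpa using hFt.const_sub (FF X B)
  obtain ⟨K0, hK0⟩ := eventually_atTop.mp (hΔ.eventually (gt_mem_nhds hc1))
  refine trapping P B φ hφ hlim (fun k => FF X B - FF X (P k)) (fun k => sub_nonneg.mpr (hle k))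
    (fun k => sub_le_sub_left (hmon (Nat.le_succ k)) _) hΔ (M ^ N) ρ c0 (C * C' ^ (m + 2)) m K0 hMNpos.le hρ0 hc0
    (by positivity) ?_ ?_ ?_
  · intro k
    have := hMN k N le_rfl
    rwa [hyP_N] at this
  · intro k hk
    have hk1 : M ^ N * dist (P k) B * (Ls + 1) < ε0 := by
      rw [hρ, lt_div_iff₀ (by positivity)] at hk
      linarith
    have hd0 : 0 ≤ M ^ N * dist (P k) B := by positivity
    have hbound : ∀ n, ‖P k n - P (k + 1) n‖ ^ 2 ≤ (FF X (P (k + 1)) - FF X (P k)) / c0 := by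
      intro n
      have hH := hyP_GrP (hP k) (hP (k + 1)) n.val
      have g1 : ‖P (k + 1) n - B n‖ < ε n := by
        have q1 := dist_le_pi_dist (hyP (P k) (P (k + 1)) (n.val + 1)) B n
        rw [hyP_succ_self, dist_eq_norm] at q1
        have q2 := hMN k (n.val + 1) n.2
        have := hε0n n
        nlinarith
      have g2 : ‖SS X (hyP (P k) (P (k + 1)) n.val) n - SS X B n‖ < ε n := by
        have q1 := hL n _ B (fun i => (hH i).isPr) hBp
        have q2 := hMN k n.val n.2.le
        have q3 := mul_le_mul (hLsn n) q2 dist_nonneg hLs0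
        have := hε0n n
        nlinarith
      have g3 := hsi n (P (k + 1) n) (P k n) _ (hP (k + 1) n) (hP k n)
        (SS_symm X n (fun i => (hH i).isPr.1)) (hs k n) g1 g2
      rw [← FF_hyP_succ X (hP k) (hP (k + 1)) n, ← FF_hyP X (hP k) (hP (k + 1)) n] at g3
      have g4 := FF_mono (hP k) (hP (k + 1)) (hs k) (Nat.zero_le n.val)
      have g5 := FF_mono (hP k) (hP (k + 1)) (hs k) (show n.val + 1 ≤ N from n.2)
      simp only [hyP_zero, hyP_N] at g4 g5
      rw [le_div_iff₀ hc0]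
      have g6 := mul_le_mul_of_nonneg_right (hc0n n) (sq_nonneg ‖P k n - P (k + 1) n‖)
      linarith
    have hinc : 0 ≤ (FF X (P (k + 1)) - FF X (P k)) / c0 :=
      div_nonneg (sub_nonneg.mpr (hmon (Nat.le_succ k))) hc0.le
    have hd : dist (P (k + 1)) (P k) ≤ Real.sqrt ((FF X (P (k + 1)) - FF X (P k)) / c0) := by
      rw [dist_pi_le_iff (Real.sqrt_nonneg _)]
      intro n
      rw [dist_comm, dist_eq_norm]
      exact Real.le_sqrt_of_sq_le (hbound n)
    have hd2 : dist (P (k + 1)) (P k) ^ 2 ≤ (FF X (P (k + 1)) - FF X (P k)) / c0 := by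
      rw [← Real.sq_sqrt hinc]
      exact pow_le_pow_left₀ dist_nonneg hd 2
    rw [le_div_iff₀ hc0] at hd2
    linarith
  · intro k hk
    have e1 : MvPolynomial.eval (ptOf (P (k + 1))) (gpoly X - MvPolynomial.C (FF X B)) =
        -(FF X B - FF X (P (k + 1))) := by
      rw [map_sub, gpoly_eval X (fun n => (hP (k + 1) n).isPr), MvPolynomial.eval_C]; ring
    have e2 : ∀ v, MvPolynomial.pderiv v (gpoly X - MvPolynomial.C (FF X B)) = MvPolynomial.pderiv v (gpoly X) := by
      intro v
      rw [map_sub, MvPolynomial.pderiv_C, sub_zero]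
    have h := hloj (ptOf (P (k + 1))) (fun v => (hP (k + 1) v.1).isPr.entry_le _ _)
    have hpos : 0 ≤ FF X B - FF X (P (k + 1)) := sub_nonneg.mpr (hle (k + 1))
    rw [e1, abs_neg, abs_of_nonneg hpos] at h
    have h2 := h (hK0 (k + 1) (by omega))
    simp only [e2] at h2
    refine h2.trans ?_
    rw [mul_assoc, ← mul_pow]
    refine mul_le_mul_of_nonneg_left ?_ hC.le
    exact pow_le_pow_left₀ (Finset.sum_nonneg fun _ _ => abs_nonneg _) (hC' _ _ (hP k) (hP (k + 1)) (hs k)) _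

end MainProj



section Final
open Matrix Filter
open scoped Matrix.Norms.Frobenius

lemma fro_eq {m k : ℕ} (M : Matrix (Fin m) (Fin k) ℝ) : fro M = ‖M‖ := by
  rw [fro, froSq, ← fnorm_sq, Real.sqrt_sq (norm_nonneg _)]

end Final

open scoped Matrix.Norms.Frobenius in
theorem stmt15_aux {N : ℕ} {I r : Fin N → ℕ} (hr : ∀ n, r n ≤ I n)
    (X : ((n : Fin N) → Fin (I n)) → ℝ)
    (A : ℕ → (n : Fin N) → Matrix (Fin (I n)) (Fin (r n)) ℝ)
    (hA : IsHOOI X A)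
    (Abar : (n : Fin N) → Matrix (Fin (I n)) (Fin (r n)) ℝ)
    (hfeas : TFeas Abar) (hlim : IsLimitPt A Abar) (hnd : NonDeg X Abar) :
    Critical X Abar ∧ BlockMax X Abar ∧
    ∀ n, Filter.Tendsto (fun k => fro (A k n * (A k n)ᵀ - Abar n * (Abar n)ᵀ))
      Filter.atTop (nhds 0) := by
  obtain ⟨hA1, hA2⟩ := hA
  obtain ⟨φ, hφ, hl⟩ := hlim
  let P : ℕ → Tup I := fun k n => A k n * (A k n)ᵀ
  let B : Tup I := fun n => Abar n * (Abar n)ᵀ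
  have hB : ∀ n, GrP (r n) (B n) := fun n => ⟨Abar n, hfeas n, rfl⟩
  have hhyb : ∀ k (n : Fin N), (fun i => hyb (A k) (A (k + 1)) n i * (hyb (A k) (A (k + 1)) n i)ᵀ) =
      hyP (P k) (P (k + 1)) n.val := by
    intro k n
    funext i
    simp only [hyb, hyP, P, Fin.lt_def]
    split_ifs <;> rfl
  obtain ⟨h1, h2⟩ := main_proj r X P (fun k n => ⟨A k n, hA1 k n, rfl⟩) (by
      rintro k n Q ⟨C, hC, rfl⟩
      have := hA2 k n C hC
      rw [Gseq, froSq_eq, froSq_eq, hhyb] at this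
      exact this) B hB φ hφ (by
      rw [tendsto_pi_nhds]
      intro n
      have e : Filter.Tendsto (fun k => A (φ k) n) Filter.atTop (nhds (Abar n)) := by
        refine tendsto_iff_norm_sub_tendsto_zero.mpr ?_
        simpa only [fro_eq] using hl n
      have hc : Continuous fun M : Matrix (Fin (I n)) (Fin (r n)) ℝ => M * Mᵀ := by fun_prop
      exact (hc.tendsto (Abar n)).comp e) (by
      intro n
      have := gap_of_sval (Gmat X Abar n) (r n) (hr n) (hnd n)
      rw [Gmat_mul] at this
      exact this)
  refine ⟨?_, ?_, ?_⟩
  · intro n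
    rw [Gmat_mul]
    have hc : B n * SS X B n = SS X B n * B n :=
      max_commute (hB n) (SS_symm X n (fun m => (hB m).isPr.1)) (h1 n)
    change SS X B n * Abar n = B n * (SS X B n * Abar n)
    rw [← Matrix.mul_assoc, hc, Matrix.mul_assoc]
    have : B n * Abar n = Abar n := by
      change Abar n * (Abar n)ᵀ * Abar n = Abar n
      rw [Matrix.mul_assoc, hfeas n, Matrix.mul_one]
    rw [this]
  · intro n C hC
    rw [froSq_eq, froSq_eq]
    exact h1 n _ ⟨C, hC, rfl⟩
  · intro n
    simp only [fro_eq]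
    refine tendsto_iff_norm_sub_tendsto_zero.mp ?_
    exact (tendsto_pi_nhds.mp h2) n


/-- If a HOOI sequence has a block-nondegenerate limit point `Ā`,
then `Ā` is a critical point and a block-wise maximizer, and
`Aₙ^k (Aₙ^k)ᵀ → Āₙ Āₙᵀ` for every `n`. -/
theorem stmt15 {N : ℕ} {I r : Fin N → ℕ} (hr : ∀ n, r n ≤ I n)
    (X : ((n : Fin N) → Fin (I n)) → ℝ)
    (A : ℕ → (n : Fin N) → Matrix (Fin (I n)) (Fin (r n)) ℝ)
    (hA : IsHOOI X A)
    (Abar : (n : Fin N) → Matrix (Fin (I n)) (Fin (r n)) ℝ)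
    (hfeas : TFeas Abar) (hlim : IsLimitPt A Abar) (hnd : NonDeg X Abar) :
    Critical X Abar ∧ BlockMax X Abar ∧
    ∀ n, Filter.Tendsto (fun k => fro (A k n * (A k n)ᵀ - Abar n * (Abar n)ᵀ))
      Filter.atTop (nhds 0) := by
  exact stmt15_aux hr X A hA Abar hfeas hlim hnd
end

section
/- Let {A^k}_{k≥0} be a HOOI sequence with a block-nondegenerate limit point Ā. If f(A^{k₀}) = f(Ā) for some k₀, then there exists an integer K ≥ k₀ such that Aₙ^k(Aₙ^k)ᵀ = Aₙ^K(Aₙ^K)ᵀ for all n and all k ≥ K. -/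
open Matrix BigOperators Filter

lemma froSq_eq_s18 {m r : ℕ} {κ : Type*} [Fintype κ] (G : Matrix (Fin m) κ ℝ)
    (B : Matrix (Fin m) (Fin r) ℝ) :
    froSq (Bᵀ * G) = trace (G * Gᵀ * (B * Bᵀ)) := by
  have h : ∀ Y : Matrix (Fin r) κ ℝ, froSq Y = trace (Y * Yᵀ) := by
    intro Y
    simp [froSq, trace, Matrix.mul_apply, sq]
  rw [h, transpose_mul, transpose_transpose, Matrix.mul_assoc, trace_mul_comm]
  simp only [Matrix.mul_assoc]

lemma Mm_apply {N : ℕ} {I r : Fin N → ℕ} (X : ((n : Fin N) → Fin (I n)) → ℝ)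
    (A : (n : Fin N) → Matrix (Fin (I n)) (Fin (r n)) ℝ) (n : Fin N) (j j' : Fin (I n)) :
    (Gmat X A n * (Gmat X A n)ᵀ) j j' =
      ∑ p : ((m : {m : Fin N // m ≠ n}) → Fin (I m.1)),
      ∑ q : ((m : {m : Fin N // m ≠ n}) → Fin (I m.1)),
        (X (fun i => if h : i = n then Fin.cast (by rw [h]) j else p ⟨i, h⟩) *
        X (fun i => if h : i = n then Fin.cast (by rw [h]) j' else q ⟨i, h⟩)) *
        ∏ m : {m : Fin N // m ≠ n}, (A m.1 * (A m.1)ᵀ) (p m) (q m) := by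
  simp only [Matrix.mul_apply, transpose_apply]
  simp only [Finset.prod_univ_sum, Fintype.piFinset_univ]
  simp only [Gmat, Finset.sum_mul_sum]
  rw [Finset.sum_comm]
  refine Finset.sum_congr rfl fun p _ => ?_
  rw [Finset.sum_comm]
  refine Finset.sum_congr rfl fun q _ => ?_
  rw [Finset.mul_sum]
  refine Finset.sum_congr rfl fun c _ => ?_
  rw [Finset.prod_mul_distrib]
  ring

lemma Mm_congr {N : ℕ} {I r : Fin N → ℕ} (X : ((n : Fin N) → Fin (I n)) → ℝ)
    (A B : (n : Fin N) → Matrix (Fin (I n)) (Fin (r n)) ℝ) (n : Fin N)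
    (h : ∀ m, m ≠ n → A m * (A m)ᵀ = B m * (B m)ᵀ) :
    Gmat X A n * (Gmat X A n)ᵀ = Gmat X B n * (Gmat X B n)ᵀ := by
  ext j j'
  rw [Mm_apply, Mm_apply]
  refine Finset.sum_congr rfl fun p _ => Finset.sum_congr rfl fun q _ => ?_
  congr 1
  exact Finset.prod_congr rfl fun m _ => by rw [h m.1 m.2]

lemma Gmat_congr {N : ℕ} {I r : Fin N → ℕ} (X : ((n : Fin N) → Fin (I n)) → ℝ)
    (A B : (n : Fin N) → Matrix (Fin (I n)) (Fin (r n)) ℝ) (n : Fin N)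
    (h : ∀ m, m ≠ n → A m = B m) : Gmat X A n = Gmat X B n := by
  ext j c
  simp only [Gmat]
  refine Finset.sum_congr rfl fun p _ => ?_
  congr 1
  exact Finset.prod_congr rfl fun m _ => by rw [h m.1 m.2]

lemma fval_eq {N : ℕ} {I r : Fin N → ℕ} (X : ((n : Fin N) → Fin (I n)) → ℝ)
    (A : (n : Fin N) → Matrix (Fin (I n)) (Fin (r n)) ℝ) (n : Fin N) :
    fval X A = froSq ((A n)ᵀ * Gmat X A n) := by
  unfold fval froSq
  rw [← Fintype.sum_prod_type',
    ← (Equiv.piSplitAt n (fun i => Fin (r i))).symm.sum_comp]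
  refine Finset.sum_congr rfl fun c _ => ?_
  congr 1
  rw [← (Equiv.piSplitAt n (fun i => Fin (I i))).symm.sum_comp, Fintype.sum_prod_type,
    Matrix.mul_apply]
  refine Finset.sum_congr rfl fun j _ => ?_
  simp only [Gmat, transpose_apply, Finset.mul_sum]
  refine Finset.sum_congr rfl fun p _ => ?_
  have hX : (Equiv.piSplitAt n (fun i => Fin (I i))).symm (j, p) =
      (fun i => if h : i = n then Fin.cast (by rw [h]) j else p ⟨i, h⟩) := by
    ext i
    by_cases h : i = n
    · subst h; simp
    · simp [h]
  have hp : ∏ i, A i ((Equiv.piSplitAt n (fun i => Fin (I i))).symm (j, p) i)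
        ((Equiv.piSplitAt n (fun i => Fin (r i))).symm c i) =
      A n j c.1 * ∏ m : {m : Fin N // m ≠ n}, A m.1 (p m) (c.2 m) := by
    rw [Fintype.prod_eq_mul_prod_subtype_ne _ n]
    congr 1
    · simp
    · refine Finset.prod_congr rfl fun m _ => ?_
      simp [m.2]
  rw [hp, hX]
  ring

lemma tendsto_of_fro {m r : ℕ} (B : ℕ → Matrix (Fin m) (Fin r) ℝ) (B' : Matrix (Fin m) (Fin r) ℝ)
    (h : Tendsto (fun k => fro (B k - B')) atTop (nhds 0)) : Tendsto B atTop (nhds B') := by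
  refine tendsto_pi_nhds.2 fun i => tendsto_pi_nhds.2 fun j => ?_
  rw [tendsto_iff_norm_sub_tendsto_zero]
  refine squeeze_zero (fun _ => norm_nonneg _) (fun k => ?_) h
  rw [Real.norm_eq_abs]
  apply Real.abs_le_sqrt
  unfold froSq
  calc _ = ((B k - B') i j)^2 := rfl
    _ ≤ ∑ j, ((B k - B') i j)^2 :=
      Finset.single_le_sum (f := fun j => ((B k - B') i j)^2) (fun _ _ => sq_nonneg _) (Finset.mem_univ j)
    _ ≤ _ := Finset.single_le_sum (f := fun i => ∑ j, ((B k - B') i j)^2)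
      (fun _ _ => Finset.sum_nonneg fun _ _ => sq_nonneg _) (Finset.mem_univ i)

lemma continuous_fval {N : ℕ} {I r : Fin N → ℕ} (X : ((n : Fin N) → Fin (I n)) → ℝ) :
    Continuous (fval X (r := r)) := by
  unfold fval
  fun_prop

lemma continuous_Mm {N : ℕ} {I r : Fin N → ℕ} (X : ((n : Fin N) → Fin (I n)) → ℝ) (n : Fin N) :
    Continuous (fun A : (n : Fin N) → Matrix (Fin (I n)) (Fin (r n)) ℝ =>
      Gmat X A n * (Gmat X A n)ᵀ) := by
  have : Continuous (fun A : (n : Fin N) → Matrix (Fin (I n)) (Fin (r n)) ℝ => Gmat X A n) := by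
    refine continuous_matrix fun i j => ?_
    unfold Gmat
    fun_prop
  fun_prop

/-- uniqueness -/
lemma uniq_proj {m : ℕ} (P Q M : Matrix (Fin m) (Fin m) ℝ) (t γ : ℝ) (hγ : 0 < γ)
    (hP : P * P = P) (hQ : Q * Q = Q) (hPt : Pᵀ = P) (hQt : Qᵀ = Q)
    (htr : trace P = trace Q) (hc : P * M = M * P)
    (hS : ∀ x : Fin m → ℝ, γ * (x ⬝ᵥ x) ≤ x ⬝ᵥ (((2 : ℝ) • P - 1) * (M - t • (1 : Matrix (Fin m) (Fin m) ℝ))) *ᵥ x)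
    (hle : trace (M * P) ≤ trace (M * Q)) : Q = P := by
  set S := ((2 : ℝ) • P - 1) * (M - t • (1 : Matrix (Fin m) (Fin m) ℝ)) with hSdef
  set D := P - Q with hD
  have hDt : Dᵀ = D := by rw [hD, transpose_sub, hPt, hQt]
  have key : trace (S * (D * D)) = trace (M * P) - trace (M * Q) := by
    have e1 : D * D = P + Q - P * Q - Q * P := by
      rw [hD, sub_mul, mul_sub, mul_sub, hP, hQ]; abel
    have e2 : S = (2:ℝ) • (M * P) - M - t • ((2:ℝ) • P) + t • 1 := by
      rw [hSdef, sub_mul, mul_sub, smul_mul_assoc, hc]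
      simp [mul_sub]
      abel
    have a1 : trace (M * P * P) = trace (M * P) := by rw [Matrix.mul_assoc, hP]
    have a2 : trace (M * P * (P * Q)) = trace (M * P * Q) := by
      rw [← Matrix.mul_assoc, Matrix.mul_assoc M P P, hP]
    have a3 : trace (M * P * (Q * P)) = trace (M * P * Q) := by
      rw [← Matrix.mul_assoc, trace_mul_comm, ← Matrix.mul_assoc, ← Matrix.mul_assoc, hc, 
        Matrix.mul_assoc M P P, hP]
    have a4 : trace (M * (P * Q)) = trace (M * P * Q) := by rw [Matrix.mul_assoc]
    have a5 : trace (M * (Q * P)) = trace (M * P * Q) := by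
      rw [← Matrix.mul_assoc, trace_mul_comm, ← Matrix.mul_assoc, hc]
    have a6 : trace (P * (P * Q)) = trace (P * Q) := by rw [← Matrix.mul_assoc, hP]
    have a7 : trace (P * (Q * P)) = trace (P * Q) := by
      rw [trace_mul_comm, Matrix.mul_assoc, hP, trace_mul_comm]
    have a8 : trace (Q * P) = trace (P * Q) := trace_mul_comm _ _
    rw [e1, e2]
    simp only [sub_mul, add_mul, mul_sub, mul_add, smul_mul_assoc, trace_add, trace_sub,
      trace_smul, Matrix.one_mul, a1, a2, a3, a4, a5, a6, a7, a8, hP, smul_eq_mul, htr]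
    ring
  have hcol : trace (S * (D * D)) = ∑ j, (D j) ⬝ᵥ S *ᵥ (D j) := by
    rw [← Matrix.mul_assoc, trace_mul_comm]
    simp only [trace, diag_apply, Matrix.mul_apply, dotProduct, mulVec]
    refine Finset.sum_congr rfl fun j _ => Finset.sum_congr rfl fun i _ => ?_
    congr 1
    refine Finset.sum_congr rfl fun k _ => ?_
    congr 1
    exact congrFun (congrFun hDt j) k
  have h0 : ∑ j, γ * (D j ⬝ᵥ D j) ≤ 0 := by
    calc _ ≤ ∑ j, (D j) ⬝ᵥ S *ᵥ (D j) := Finset.sum_le_sum fun j _ => hS _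
      _ ≤ 0 := by rw [← hcol, key]; linarith
  have hn : ∀ j, 0 ≤ γ * (D j ⬝ᵥ D j) := fun j =>
    mul_nonneg hγ.le (Finset.sum_nonneg fun i _ => mul_self_nonneg _)
  have h1 := (Finset.sum_eq_zero_iff_of_nonneg (fun j _ => hn j)).1
    (le_antisymm h0 (Finset.sum_nonneg fun j _ => hn j))
  have : D = 0 := by
    ext j i
    have h2 := h1 j (Finset.mem_univ j)
    have h3 : D j ⬝ᵥ D j = 0 := by
      rcases mul_eq_zero.1 h2 with h | h
      · exact absurd h hγ.ne'
      · exact h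
    exact congrFun (dotProduct_self_eq_zero.1 h3) i
  exact (sub_eq_zero.1 this).symm

lemma cubic_zero (α β γ : ℝ) (h : ∀ s : ℝ, s * α + s ^ 2 * β + s ^ 3 * γ ≤ 0) : α = 0 := by
  have hd : HasDerivAt (fun s : ℝ => s * α + s ^ 2 * β + s ^ 3 * γ) α 0 := by
    have := (((hasDerivAt_id (0:ℝ)).mul_const α).add
      (((hasDerivAt_id (0:ℝ)).pow 2).mul_const β)).add
      (((hasDerivAt_id (0:ℝ)).pow 3).mul_const γ)
    refine (this.congr_deriv (by simp)).congr_of_eventuallyEq ?_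
    exact Filter.Eventually.of_forall fun s => by simp
  refine IsLocalMax.hasDerivAt_eq_zero ?_ hd
  refine Filter.Eventually.of_forall fun s => ?_
  simpa using h s

lemma crit_of_max {m r : ℕ} (M : Matrix (Fin m) (Fin m) ℝ) (hM : Mᵀ = M)
    (B : Matrix (Fin m) (Fin r) ℝ) (hB : Bᵀ * B = 1)
    (hmax : ∀ C : Matrix (Fin m) (Fin r) ℝ, Cᵀ * C = 1 →
      trace (M * (C * Cᵀ)) ≤ trace (M * (B * Bᵀ))) :
    (B * Bᵀ) * M = M * (B * Bᵀ) := by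
  obtain ⟨P, hPdef⟩ : ∃ P, P = B * Bᵀ := ⟨_, rfl⟩
  rw [← hPdef] at hmax ⊢
  have hP : P * P = P := by
    rw [hPdef, Matrix.mul_assoc, ← Matrix.mul_assoc Bᵀ, hB, Matrix.one_mul]
  have hPt : Pᵀ = P := by rw [hPdef, transpose_mul, transpose_transpose]
  have hh : ∀ v : Fin m → ℝ, (v ⬝ᵥ P *ᵥ v) * (v ⬝ᵥ M *ᵥ v) ≤ (v ⬝ᵥ v) * (v ⬝ᵥ (P * M) *ᵥ v) := by
    intro v
    by_cases hv : v = 0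
    · simp [hv]
    have hvv : 0 < v ⬝ᵥ v := by
      have h1 : 0 ≤ v ⬝ᵥ v := Finset.sum_nonneg fun i _ => mul_self_nonneg _
      exact lt_of_le_of_ne h1 (fun h => hv (dotProduct_self_eq_zero.1 h.symm))
    set c : ℝ := 2 / (v ⬝ᵥ v) with hc
    set W := vecMulVec v v with hW
    have hWt : Wᵀ = W := by ext i j; simp [hW, vecMulVec_apply, mul_comm]
    have hWW : ∀ Z : Matrix (Fin m) (Fin m) ℝ, W * Z * W = (v ⬝ᵥ Z *ᵥ v) • W := by
      intro Z
      rw [hW, vecMulVec_mul, vecMulVec_mul_vecMulVec, dotProduct_mulVec]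
      ext i j; simp [vecMulVec_apply]; ring
    have htrW : ∀ Z : Matrix (Fin m) (Fin m) ℝ, trace (Z * W) = v ⬝ᵥ Z *ᵥ v := by
      intro Z
      rw [hW, mul_vecMulVec, trace_vecMulVec, dotProduct_comm]
    set H : Matrix (Fin m) (Fin m) ℝ := 1 - c • W with hH
    have hHt : Hᵀ = H := by rw [hH, transpose_sub, transpose_smul, hWt, transpose_one]
    have hW2 : W * W = (v ⬝ᵥ v) • W := by
      have := hWW 1
      simpa using this
    have hHH : H * H = 1 := by
      rw [hH, sub_mul, mul_sub, mul_sub, Matrix.one_mul, Matrix.one_mul, Matrix.mul_one,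
        smul_mul_smul_comm, hW2, smul_smul]
      have : c * c * (v ⬝ᵥ v) = c + c := by rw [hc]; field_simp; norm_num
      rw [this, add_smul]; abel
    have hC : (H * B)ᵀ * (H * B) = 1 := by
      rw [transpose_mul, hHt, Matrix.mul_assoc, ← Matrix.mul_assoc H, hHH, Matrix.one_mul, hB]
    have hCC : (H * B) * (H * B)ᵀ = P - c • (W * P) - c • (P * W) + (c * c) • ((v ⬝ᵥ P *ᵥ v) • W) := by
      rw [transpose_mul, hHt, ← hWW P]
      have : H * B * (Bᵀ * H) = H * P * H := by simp only [hPdef, Matrix.mul_assoc]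
      rw [this, hH]
      simp only [sub_mul, mul_sub, Matrix.one_mul, Matrix.mul_one, smul_mul_assoc, mul_smul_comm,
        smul_smul, smul_sub]
      abel
    have h1 := hmax _ hC
    rw [hCC] at h1
    have t1 : trace (M * (W * P)) = v ⬝ᵥ (P * M) *ᵥ v := by
      rw [← htrW, ← Matrix.mul_assoc, trace_mul_comm, Matrix.mul_assoc]
    have t2 : trace (M * (P * W)) = v ⬝ᵥ (P * M) *ᵥ v := by
      rw [← htrW, ← trace_transpose, transpose_mul, transpose_mul, hM, hPt, hWt,
        Matrix.mul_assoc, trace_mul_comm]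
    simp only [mul_sub, mul_add, mul_smul_comm, trace_sub, trace_add, trace_smul, t1, t2, htrW,
      smul_eq_mul] at h1
    have hcpos : 0 < c := by positivity
    have h2 : c * ((v ⬝ᵥ P *ᵥ v) * (v ⬝ᵥ M *ᵥ v)) ≤ 2 * (v ⬝ᵥ (P * M) *ᵥ v) := by
      by_contra hcon
      push Not at hcon
      have := mul_pos hcpos (sub_pos.2 hcon)
      nlinarith
    have h3 : c * (v ⬝ᵥ v) = 2 := by rw [hc]; field_simp
    have h4 : c * ((v ⬝ᵥ P *ᵥ v) * (v ⬝ᵥ M *ᵥ v)) ≤ c * ((v ⬝ᵥ v) * (v ⬝ᵥ (P * M) *ᵥ v)) := by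
      rw [← mul_assoc c (v ⬝ᵥ v), h3]; exact h2
    exact le_of_mul_le_mul_left h4 hcpos
  have hz : ∀ z w : Fin m → ℝ, (P *ᵥ z) ⬝ᵥ M *ᵥ (w - P *ᵥ w) = 0 := by
    intro z w
    set x := P *ᵥ z with hx
    set y := w - P *ᵥ w with hy
    have hPx : P *ᵥ x = x := by rw [hx, mulVec_mulVec, hP]
    have hPy : P *ᵥ y = 0 := by rw [hy, mulVec_sub, mulVec_mulVec, hP, sub_self]
    have hsym : ∀ (S : Matrix (Fin m) (Fin m) ℝ), Sᵀ = S → ∀ a b : Fin m → ℝ,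
        a ⬝ᵥ S *ᵥ b = b ⬝ᵥ S *ᵥ a := by
      intro S hS a b
      rw [dotProduct_mulVec, ← mulVec_transpose, hS, dotProduct_comm]
    have hxy : x ⬝ᵥ y = 0 := by
      rw [← hPx, dotProduct_comm, hsym P hPt, hPy, dotProduct_zero]
    have hyx : y ⬝ᵥ x = 0 := by rw [dotProduct_comm, hxy]
    have hyMx : y ⬝ᵥ M *ᵥ x = x ⬝ᵥ M *ᵥ y := hsym M hM _ _
    have hPM : ∀ a b : Fin m → ℝ, a ⬝ᵥ (P * M) *ᵥ b = (P *ᵥ a) ⬝ᵥ M *ᵥ b := by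
      intro a b
      rw [← mulVec_mulVec, hsym P hPt, dotProduct_comm]
    have hq : (x ⬝ᵥ x) * (x ⬝ᵥ M *ᵥ y) = 0 := by
      apply cubic_zero _ ((x ⬝ᵥ x) * (y ⬝ᵥ M *ᵥ y) - (y ⬝ᵥ y) * (x ⬝ᵥ M *ᵥ x))
        (-((y ⬝ᵥ y) * (x ⬝ᵥ M *ᵥ y)))
      intro s
      have := hh (x + s • y)
      rw [hPM] at this
      simp only [mulVec_add, mulVec_smul, hPx, hPy, smul_zero, add_zero, add_dotProduct,
        dotProduct_add, smul_dotProduct, dotProduct_smul, hxy, hyx, hyMx, smul_eq_mul] at this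
      linarith
    rcases mul_eq_zero.1 hq with h | h
    · rw [dotProduct_self_eq_zero.1 h, zero_dotProduct]
    · exact h
  have h0 : P * M = P * M * P := by
    rw [← sub_eq_zero]
    ext i j
    have h1 := hz (Pi.single i 1) (Pi.single j 1)
    have h2 : M *ᵥ (Pi.single j 1 - P *ᵥ Pi.single j 1) = (M - M * P) *ᵥ Pi.single j 1 := by
      rw [mulVec_sub, sub_mulVec, mulVec_mulVec]
    rw [h2] at h1
    have h3 : P * M - P * M * P = P * (M - M * P) := by rw [mul_sub, Matrix.mul_assoc]
    rw [h3, Matrix.mul_apply, Matrix.zero_apply]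
    rw [← h1]
    simp only [dotProduct, mulVec_single_one, Matrix.col_apply]
    refine Finset.sum_congr rfl fun k _ => ?_
    congr 1
    exact congrFun (congrFun hPt k) i
  have h1 := congrArg transpose h0
  rw [transpose_mul, transpose_mul, transpose_mul, hPt, hM, ← Matrix.mul_assoc] at h1
  rw [h0, h1]

lemma quad_pert {m : ℕ} (E : Matrix (Fin m) (Fin m) ℝ) (x : Fin m → ℝ) :
    |x ⬝ᵥ E *ᵥ x| ≤ (∑ i, ∑ j, |E i j|) * (x ⬝ᵥ x) := by
  have hx : ∀ i, |x i| ^ 2 ≤ x ⬝ᵥ x := by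
    intro i
    rw [sq_abs, sq]
    exact Finset.single_le_sum (f := fun i => x i * x i) (fun _ _ => mul_self_nonneg _)
      (Finset.mem_univ i)
  obtain ⟨c, hc⟩ : ∃ c, c = x ⬝ᵥ x := ⟨_, rfl⟩
  rw [← hc] at hx ⊢
  simp only [mulVec, dotProduct, Finset.mul_sum, Finset.sum_mul]
  refine (Finset.abs_sum_le_sum_abs _ _).trans ?_
  refine Finset.sum_le_sum fun i _ => ?_
  refine (Finset.abs_sum_le_sum_abs _ _).trans ?_
  refine Finset.sum_le_sum fun j _ => ?_
  rw [abs_mul, abs_mul]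
  have h1 := hx i
  have h2 := hx j
  have : |x i| * |x j| ≤ c := by nlinarith [sq_nonneg (|x i| - |x j|)]
  nlinarith [mul_le_mul_of_nonneg_left this (abs_nonneg (E i j))]

lemma eigList_eq {m : ℕ} {κ : Type*} [Fintype κ] (Y : Matrix (Fin m) κ ℝ) :
    ∃ σ : Fin m ≃ Fin m,
      Antitone (fun i => (Matrix.isHermitian_mul_conjTranspose_self Y).eigenvalues (σ i)) ∧
      eigList Y = List.ofFn
        (fun i => (Matrix.isHermitian_mul_conjTranspose_self Y).eigenvalues (σ i)) := by
  set hM := Matrix.isHermitian_mul_conjTranspose_self Y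
  refine ⟨(finCongr (Fintype.card_fin m).symm).trans
    (Fintype.equivOfCardEq (Fintype.card_fin _)), ?_, ?_⟩
  · intro i j hij
    simp only [Matrix.IsHermitian.eigenvalues, Equiv.trans_apply, Equiv.symm_apply_apply]
    exact hM.eigenvalues₀_antitone (by simpa using hij)
  · apply List.Perm.eq_of_sortedGE
    · unfold eigList
      rw [List.sortedGE_reverse]
      exact (Multiset.pairwise_sort _ _).sortedLE
    · apply Antitone.sortedGE_ofFn
      intro i j hij
      simp only [Matrix.IsHermitian.eigenvalues, Equiv.trans_apply, Equiv.symm_apply_apply]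
      exact hM.eigenvalues₀_antitone (by simpa using hij)
    · unfold eigList
      refine (List.reverse_perm _).trans ?_
      rw [← Multiset.coe_eq_coe, Multiset.sort_eq, ← Fin.univ_val_map]
      have := Finset.map_univ_equiv ((finCongr (Fintype.card_fin m).symm).trans
        (Fintype.equivOfCardEq (Fintype.card_fin (Fintype.card (Fin m)))))
      conv_lhs => rw [← this, Finset.map_val, Multiset.map_map]
      rfl

lemma gap_exists {m r : ℕ} (hr : r ≤ m) {κ : Type*} [Fintype κ] (Y : Matrix (Fin m) κ ℝ)
    (h : sval Y (r + 1) < sval Y r) :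
    ∃ U : Matrix (Fin m) (Fin r) ℝ, Uᵀ * U = 1 ∧ ∃ t γ : ℝ, 0 < γ ∧
      (U * Uᵀ) * (Y * Yᵀ) = (Y * Yᵀ) * (U * Uᵀ) ∧
      ∀ x : Fin m → ℝ, γ * (x ⬝ᵥ x) ≤ x ⬝ᵥ (((2 : ℝ) • (U * Uᵀ) - 1) *
        (Y * Yᵀ - t • (1 : Matrix (Fin m) (Fin m) ℝ))) *ᵥ x := by
  have hr1 : 1 ≤ r := by
    rcases Nat.eq_zero_or_pos r with h0 | h0
    · subst h0; simp [sval] at h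
    · exact h0
  obtain ⟨σ, hanti, hL⟩ := eigList_eq Y
  have h' : (eigList Y).getD r 0 < (eigList Y).getD (r - 1) 0 := by
    by_contra hcon
    push Not at hcon
    exact absurd h (not_lt.2 (Real.sqrt_le_sqrt (by simpa [sval] using hcon)))
  set hM := Matrix.isHermitian_mul_conjTranspose_self Y with hMdef
  set l := hM.eigenvalues with hl
  set a := (eigList Y).getD (r - 1) 0 with ha
  set b := (eigList Y).getD r 0 with hb
  have hga : ∀ i : Fin m, i.val < r → a ≤ l (σ i) := by
    intro i hi
    have : a = l (σ ⟨r - 1, by omega⟩) := by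
      rw [ha, hL, List.getD_eq_getElem _ _ (by simp; omega)]
      simp
    rw [this]
    exact hanti (by rw [Fin.le_def]; simp; omega)
  have hgb : ∀ i : Fin m, r ≤ i.val → l (σ i) ≤ b := by
    intro i hi
    have hrm : r < m := lt_of_le_of_lt hi i.2
    have : b = l (σ ⟨r, hrm⟩) := by
      rw [hb, hL, List.getD_eq_getElem _ _ (by simp; omega)]
      simp
    rw [this]
    exact hanti (by rw [Fin.le_def]; simp; omega)
  set V : Matrix (Fin m) (Fin m) ℝ := (hM.eigenvectorUnitary : Matrix (Fin m) (Fin m) ℝ) with hV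
  have hstar : star V = Vᵀ := by
    rw [star_eq_conjTranspose, conjTranspose_eq_transpose_of_trivial]
  have hVV : Vᵀ * V = 1 := by
    rw [← hstar]
    exact Matrix.UnitaryGroup.star_mul_self hM.eigenvectorUnitary
  have hVV' : V * Vᵀ = 1 := mul_eq_one_comm.1 hVV
  have hspec : Y * Yᵀ = V * diagonal l * Vᵀ := by
    have := hM.spectral_theorem
    rw [Unitary.conjStarAlgAut_apply] at this
    rw [← hstar]
    exact this
  let e : Fin r ↪ Fin m := (Fin.castLEEmb hr).trans σ.toEmbedding
  set E : Fin m → ℝ := fun j => if j ∈ Finset.univ.map e then 1 else 0 with hE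
  set U := V.submatrix id e with hU
  have hUU : Uᵀ * U = 1 := by
    have : Uᵀ * U = (Vᵀ * V).submatrix e e := by
      ext i j; simp [hU, Matrix.mul_apply]
    rw [this, hVV, submatrix_one_embedding]
  have hUP : U * Uᵀ = V * diagonal E * Vᵀ := by
    ext i k
    rw [Matrix.mul_apply, Matrix.mul_apply]
    simp only [mul_diagonal, transpose_apply, hU, submatrix_apply, id, hE]
    have := Finset.sum_map Finset.univ e (fun j => V i j * V k j)
    rw [← this]
    simp only [mul_ite, mul_one, mul_zero, ite_mul, zero_mul]
    rw [Finset.sum_ite_mem, Finset.univ_inter]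
  have hprod : ∀ d d' : Fin m → ℝ, (V * diagonal d * Vᵀ) * (V * diagonal d' * Vᵀ) =
      V * diagonal (fun i => d i * d' i) * Vᵀ := by
    intro d d'
    rw [← diagonal_mul_diagonal]
    calc _ = V * diagonal d * (Vᵀ * V) * diagonal d' * Vᵀ := by simp only [Matrix.mul_assoc]
      _ = _ := by rw [hVV, Matrix.mul_one]; simp only [Matrix.mul_assoc]
  set t := (a + b) / 2
  set γ := (a - b) / 2
  refine ⟨U, hUU, t, γ, by simp only [γ]; linarith, ?_, ?_⟩
  · rw [hUP, hspec, hprod, hprod]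
    simp only [mul_comm]
  · intro x
    have e1 : (2 : ℝ) • (U * Uᵀ) - 1 = V * diagonal (fun j => 2 * E j - 1) * Vᵀ := by
      have : diagonal (fun j => 2 * E j - 1) = (2:ℝ) • diagonal E - 1 := by
        ext i j; by_cases h : i = j
        · subst h; simp
        · simp [h]
      rw [this, hUP, mul_sub, sub_mul, Matrix.mul_one, hVV']; simp
    have e2 : Y * Yᵀ - t • (1 : Matrix (Fin m) (Fin m) ℝ) = V * diagonal (fun j => l j - t) * Vᵀ := by
      have : diagonal (fun j => l j - t) = diagonal l - t • (1 : Matrix (Fin m) (Fin m) ℝ) := by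
        ext i j; by_cases h : i = j
        · subst h; simp
        · simp [h]
      rw [this, hspec, mul_sub, sub_mul, mul_smul_comm, Matrix.mul_one, smul_mul_assoc, hVV']
    rw [e1, e2, hprod]
    have q : ∀ d : Fin m → ℝ, x ⬝ᵥ (V * diagonal d * Vᵀ) *ᵥ x = ∑ j, d j * ((Vᵀ *ᵥ x) j) ^ 2 := by
      intro d
      rw [← mulVec_mulVec, ← mulVec_mulVec, dotProduct_mulVec, ← mulVec_transpose]
      simp only [dotProduct, mulVec_diagonal]
      refine Finset.sum_congr rfl fun j _ => by ring
    have q1 : x ⬝ᵥ x = ∑ j, ((Vᵀ *ᵥ x) j) ^ 2 := by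
      have := q (fun _ => 1)
      rw [diagonal_one, Matrix.mul_one, hVV', one_mulVec] at this
      simpa using this
    rw [q, q1, Finset.mul_sum]
    refine Finset.sum_le_sum fun j _ => mul_le_mul_of_nonneg_right ?_ (sq_nonneg _)
    simp only [hE]
    by_cases hj : (σ.symm j).val < r
    · have hmem : j ∈ Finset.univ.map e := by
        rw [Finset.mem_map]
        refine ⟨⟨(σ.symm j).val, hj⟩, Finset.mem_univ _, ?_⟩
        simp [e]
      have := hga _ hj
      rw [Equiv.apply_symm_apply] at this
      simp only [hmem, if_true, t, γ]
      linarith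
    · have hmem : j ∉ Finset.univ.map e := by
        rw [Finset.mem_map]
        rintro ⟨c, _, hc⟩
        apply hj
        rw [← hc]
        simp [e]
      have := hgb _ (not_lt.1 hj)
      rw [Equiv.apply_symm_apply] at this
      simp only [hmem, if_false, t, γ]
      linarith

/-- `B` maximizes. -/
def PMax {m r : ℕ} (M : Matrix (Fin m) (Fin m) ℝ) (B : Matrix (Fin m) (Fin r) ℝ) : Prop :=
  ∀ C : Matrix (Fin m) (Fin r) ℝ, Cᵀ * C = 1 → trace (M * (C * Cᵀ)) ≤ trace (M * (B * Bᵀ))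

/-- Uniqueness of the maximizing projection. -/
def PUniq {m : ℕ} (r : ℕ) (M P : Matrix (Fin m) (Fin m) ℝ) : Prop :=
  ∀ C : Matrix (Fin m) (Fin r) ℝ, Cᵀ * C = 1 → trace (M * P) ≤ trace (M * (C * Cᵀ)) →
    C * Cᵀ = P

lemma proj_facts {m r : ℕ} (B : Matrix (Fin m) (Fin r) ℝ) (hB : Bᵀ * B = 1) :
    (B * Bᵀ) * (B * Bᵀ) = B * Bᵀ ∧ (B * Bᵀ)ᵀ = B * Bᵀ ∧ trace (B * Bᵀ) = r := by
  refine ⟨?_, ?_, ?_⟩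
  · rw [Matrix.mul_assoc, ← Matrix.mul_assoc Bᵀ, hB, Matrix.one_mul]
  · rw [transpose_mul, transpose_transpose]
  · rw [trace_mul_comm, hB]; simp

lemma tendsto_trace_mul {m : ℕ} {M P : ℕ → Matrix (Fin m) (Fin m) ℝ}
    {M' P' : Matrix (Fin m) (Fin m) ℝ}
    (hM : Tendsto M atTop (nhds M')) (hP : Tendsto P atTop (nhds P')) :
    Tendsto (fun j => trace (M j * P j)) atTop (nhds (trace (M' * P'))) := by
  simp only [Matrix.trace, Matrix.diag_apply, Matrix.mul_apply]
  have hM' : ∀ i k, Tendsto (fun j => M j i k) atTop (nhds (M' i k)) := fun i k =>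
    tendsto_pi_nhds.1 (tendsto_pi_nhds.1 hM i) k
  have hP' : ∀ i k, Tendsto (fun j => P j i k) atTop (nhds (P' i k)) := fun i k =>
    tendsto_pi_nhds.1 (tendsto_pi_nhds.1 hP i) k
  exact tendsto_finsetSum _ fun i _ => tendsto_finsetSum _ fun k _ => (hM' i k).mul (hP' k i)

lemma core {m r : ℕ} (hr : r ≤ m) {κ : Type*} [Fintype κ] (Y : Matrix (Fin m) κ ℝ)
    (h : sval Y (r + 1) < sval Y r) (M : ℕ → Matrix (Fin m) (Fin m) ℝ)
    (B : ℕ → Matrix (Fin m) (Fin r) ℝ) (B' : Matrix (Fin m) (Fin r) ℝ)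
    (hMt : ∀ j, (M j)ᵀ = M j) (hB : ∀ j, (B j)ᵀ * B j = 1) (hB' : B'ᵀ * B' = 1)
    (hMl : Tendsto M atTop (nhds (Y * Yᵀ))) (hBl : Tendsto B atTop (nhds B'))
    (hmax : ∀ᶠ j in atTop, PMax (M j) (B j)) :
    ∀ᶠ j in atTop, PUniq r (M j) (B j * (B j)ᵀ) := by
  obtain ⟨U, hU, t, γ, hγ, hcomm, hS⟩ := gap_exists hr Y h
  have hPl : Tendsto (fun j => B j * (B j)ᵀ) atTop (nhds (B' * B'ᵀ)) :=
    ((by fun_prop : Continuous fun B : Matrix (Fin m) (Fin r) ℝ => B * Bᵀ).tendsto B').comp hBl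
  have hpair : Tendsto (fun j => (M j, B j * (B j)ᵀ)) atTop (nhds (Y * Yᵀ, B' * B'ᵀ)) :=
    hMl.prodMk_nhds hPl
  have hle : trace (Y * Yᵀ * (U * Uᵀ)) ≤ trace (Y * Yᵀ * (B' * B'ᵀ)) := by
    have c1 : Tendsto (fun j => trace (M j * (U * Uᵀ))) atTop
        (nhds (trace (Y * Yᵀ * (U * Uᵀ)))) := tendsto_trace_mul hMl tendsto_const_nhds
    have c2 : Tendsto (fun j => trace (M j * (B j * (B j)ᵀ))) atTop
        (nhds (trace (Y * Yᵀ * (B' * B'ᵀ)))) :=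
      tendsto_trace_mul hMl hPl
    refine le_of_tendsto_of_tendsto c1 c2 ?_
    filter_upwards [hmax] with j hj using hj U hU
  obtain ⟨u1, u2, u3⟩ := proj_facts U hU
  obtain ⟨b1, b2, b3⟩ := proj_facts B' hB'
  have hBU : B' * B'ᵀ = U * Uᵀ :=
    uniq_proj _ _ _ t γ hγ u1 b1 u2 b2 (u3.trans b3.symm) hcomm hS hle
  rw [← hBU] at hS
  set Sf : Matrix (Fin m) (Fin m) ℝ → Matrix (Fin m) (Fin m) ℝ → Matrix (Fin m) (Fin m) ℝ :=
    fun P M => ((2 : ℝ) • P - 1) * (M - t • (1 : Matrix (Fin m) (Fin m) ℝ)) with hSf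
  have hlim : Tendsto (fun j => ∑ i, ∑ k,
      |(Sf (B j * (B j)ᵀ) (M j) - Sf (B' * B'ᵀ) (Y * Yᵀ)) i k|) atTop (nhds 0) := by
    have hc : Continuous (fun p : Matrix (Fin m) (Fin m) ℝ × Matrix (Fin m) (Fin m) ℝ =>
        ∑ i, ∑ k, |(Sf p.2 p.1 - Sf (B' * B'ᵀ) (Y * Yᵀ)) i k|) := by
      have hc' : Continuous (fun p : Matrix (Fin m) (Fin m) ℝ × Matrix (Fin m) (Fin m) ℝ =>
        Sf p.2 p.1) := by simp only [hSf]; fun_prop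
      refine continuous_finsetSum _ fun i _ => continuous_finsetSum _ fun k _ => ?_
      exact ((hc'.sub continuous_const).matrix_elem i k).abs
    have := (hc.tendsto (Y * Yᵀ, B' * B'ᵀ)).comp hpair
    simpa [Function.comp_def] using this
  filter_upwards [hmax, hlim.eventually (gt_mem_nhds (half_pos hγ))] with j hj hlt
  intro C hC hCle
  obtain ⟨p1, p2, p3⟩ := proj_facts (B j) (hB j)
  obtain ⟨q1, q2, q3⟩ := proj_facts C hC
  refine uniq_proj _ _ (M j) t (γ / 2) (half_pos hγ) p1 q1 p2 q2 (p3.trans q3.symm)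
    (crit_of_max _ (hMt j) _ (hB j) hj) ?_ hCle
  intro x
  have h1 := hS x
  have h2 := quad_pert (Sf (B j * (B j)ᵀ) (M j) - Sf (B' * B'ᵀ) (Y * Yᵀ)) x
  rw [sub_mulVec, dotProduct_sub] at h2
  have h3 := (abs_le.1 h2).1
  have hxx : 0 ≤ x ⬝ᵥ x := Finset.sum_nonneg fun i _ => mul_self_nonneg _
  have h4 := mul_le_mul_of_nonneg_right hlt.le hxx
  change _ ≤ x ⬝ᵥ Sf (B j * (B j)ᵀ) (M j) *ᵥ x
  change _ ≤ x ⬝ᵥ Sf (B' * B'ᵀ) (Y * Yᵀ) *ᵥ x at h1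
  linarith

/-- Hybrid tuple with natural-number cut. -/
def hybN {N : ℕ} {I r : Fin N → ℕ}
    (Aold Anew : (n : Fin N) → Matrix (Fin (I n)) (Fin (r n)) ℝ) (n : ℕ) :
    (i : Fin N) → Matrix (Fin (I i)) (Fin (r i)) ℝ :=
  fun i => if i.val < n then Anew i else Aold i

lemma fval_hybN {N : ℕ} {I r : Fin N → ℕ} (X : ((n : Fin N) → Fin (I n)) → ℝ)
    (A A' : (n : Fin N) → Matrix (Fin (I n)) (Fin (r n)) ℝ) (n : Fin N) :
    fval X (hybN A A' n.val) = froSq ((A n)ᵀ * Gmat X (hyb A A' n) n) := by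
  rw [fval_eq X _ n]
  have h1 : hybN A A' n.val n = A n := by simp [hybN]
  rw [h1]
  congr 2

lemma fval_hybN_succ {N : ℕ} {I r : Fin N → ℕ} (X : ((n : Fin N) → Fin (I n)) → ℝ)
    (A A' : (n : Fin N) → Matrix (Fin (I n)) (Fin (r n)) ℝ) (n : Fin N) :
    fval X (hybN A A' (n.val + 1)) = froSq ((A' n)ᵀ * Gmat X (hyb A A' n) n) := by
  rw [fval_eq X _ n]
  have h1 : hybN A A' (n.val + 1) n = A' n := by simp [hybN]
  rw [h1, Gmat_congr X _ (hyb A A' n) n]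
  intro m hm
  have h2 : m.val < n.val + 1 ↔ m < n := by
    have : m.val ≠ n.val := fun h => hm (Fin.ext h)
    rw [Fin.lt_def]; omega
  simp only [hybN, hyb, h2]

lemma hybN_mono {N : ℕ} {I r : Fin N → ℕ} (X : ((n : Fin N) → Fin (I n)) → ℝ)
    (A : ℕ → (n : Fin N) → Matrix (Fin (I n)) (Fin (r n)) ℝ) (hA : IsHOOI X A) (k : ℕ) :
    Monotone (fun n => fval X (hybN (A k) (A (k + 1)) n)) := by
  refine monotone_nat_of_le_succ fun n => ?_
  by_cases hn : n < N
  · have h1 := fval_hybN X (A k) (A (k + 1)) ⟨n, hn⟩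
    have h2 := fval_hybN_succ X (A k) (A (k + 1)) ⟨n, hn⟩
    simp only at h1 h2
    rw [h1, h2]
    exact hA.2 k ⟨n, hn⟩ _ (hA.1 k _)
  · apply le_of_eq
    congr 1
    funext i
    have := i.2
    simp only [hybN]
    rw [if_pos (by omega), if_pos (by omega)]

/-- If a HOOI sequence has a block-nondegenerate limit point `Ā`
and `f(A^{k₀}) = f(Ā)` for some `k₀`, then the projection matrices are eventually
constant. -/
theorem stmt18 {N : ℕ} {I r : Fin N → ℕ} (hr : ∀ n, r n ≤ I n)
    (X : ((n : Fin N) → Fin (I n)) → ℝ)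
    (A : ℕ → (n : Fin N) → Matrix (Fin (I n)) (Fin (r n)) ℝ)
    (hA : IsHOOI X A)
    (Abar : (n : Fin N) → Matrix (Fin (I n)) (Fin (r n)) ℝ)
    (hfeas : TFeas Abar) (hlim : IsLimitPt A Abar) (hnd : NonDeg X Abar)
    (k₀ : ℕ) (hk₀ : fval X (A k₀) = fval X Abar) :
    ∃ K : ℕ, k₀ ≤ K ∧ ∀ n, ∀ k ≥ K, A k n * (A k n)ᵀ = A K n * (A K n)ᵀ := by
  obtain ⟨φ, hφ, hl⟩ := hlim
  have hlA : ∀ n, Tendsto (fun j => A (φ j) n) atTop (nhds (Abar n)) :=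
    fun n => tendsto_of_fro _ _ (hl n)
  have hlA' : Tendsto (fun j => A (φ j)) atTop (nhds Abar) := tendsto_pi_nhds.2 hlA
  have hz : ∀ k, hybN (A k) (A (k + 1)) 0 = A k := fun k => by funext i; simp [hybN]
  have hN : ∀ k, hybN (A k) (A (k + 1)) N = A (k + 1) := fun k => by funext i; simp [hybN]
  have hmono : Monotone (fun k => fval X (A k)) := by
    refine monotone_nat_of_le_succ fun k => ?_
    have := hybN_mono X A hA k (Nat.zero_le N)
    simpa only [hz, hN] using this
  have hub : ∀ k, fval X (A k) ≤ fval X Abar := by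
    intro k
    have ht : Tendsto (fun j => fval X (A (φ j))) atTop (nhds (fval X Abar)) :=
      ((continuous_fval X).tendsto Abar).comp hlA'
    exact (hmono (hφ.id_le k)).trans
      ((hmono.comp hφ.monotone).ge_of_tendsto ht k)
  have hconst : ∀ k, k₀ ≤ k → fval X (A k) = fval X Abar := fun k hk =>
    le_antisymm (hub k) (hk₀ ▸ hmono hk)
  -- the old block has the same value as the new block
  have heq : ∀ k, k₀ ≤ k → ∀ n, froSq ((A k n)ᵀ * Gseq X A k n) =
      froSq ((A (k + 1) n)ᵀ * Gseq X A k n) := by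
    intro k hk n
    have hm := hybN_mono X A hA k
    have h1 := hm (Nat.zero_le n.val)
    have h2 := hm (show n.val + 1 ≤ N from n.2)
    simp only [hz, hN] at h1 h2
    rw [hconst k hk, fval_hybN] at h1
    rw [hconst (k + 1) (by omega), fval_hybN_succ] at h2
    exact le_antisymm (hA.2 k n _ (hA.1 k n)) (h2.trans h1)
  set Mm : ℕ → (n : Fin N) → Matrix (Fin (I n)) (Fin (I n)) ℝ :=
    fun k n => Gmat X (A k) n * (Gmat X (A k) n)ᵀ with hMm
  have hMseq : ∀ k n, (∀ m, m < n → A (k + 1) m * (A (k + 1) m)ᵀ = A k m * (A k m)ᵀ) →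
      Gseq X A k n * (Gseq X A k n)ᵀ = Mm k n := by
    intro k n h
    apply Mm_congr
    intro m _
    simp only [hyb]
    split_ifs with hmn
    · exact h m hmn
    · rfl
  have hstep : ∀ k, k₀ ≤ k → ∀ n,
      (∀ m, m < n → A (k + 1) m * (A (k + 1) m)ᵀ = A k m * (A k m)ᵀ) →
      PMax (Mm k n) (A k n) ∧ (PUniq (r n) (Mm k n) (A k n * (A k n)ᵀ) →
        A (k + 1) n * (A (k + 1) n)ᵀ = A k n * (A k n)ᵀ) := by
    intro k hk n h
    have he := heq k hk n
    have hM := hMseq k n h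
    have hmx : PMax (Mm k n) (A k n) := by
      intro C hC
      rw [← hM, ← froSq_eq_s18, ← froSq_eq_s18, he]
      exact hA.2 k n C hC
    refine ⟨hmx, fun hu => hu _ (hA.1 (k + 1) n) ?_⟩
    rw [← hM, ← froSq_eq_s18, ← froSq_eq_s18, he]
  have hprefix : ∀ k, k₀ ≤ k → ∀ n,
      (∀ m, m < n → PUniq (r m) (Mm k m) (A k m * (A k m)ᵀ)) →
      ∀ m, m < n → A (k + 1) m * (A (k + 1) m)ᵀ = A k m * (A k m)ᵀ := by
    intro k hk n hu m
    induction m using WellFoundedLT.induction with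
    | ind m ih =>
      intro hm
      exact (hstep k hk m fun m' hm' => ih m' hm' (hm'.trans hm)).2 (hu m hm)
  have hge : ∀ᶠ j in atTop, k₀ ≤ φ j := hφ.tendsto_atTop.eventually_ge_atTop k₀
  have huniq : ∀ n, ∀ᶠ j in atTop, PUniq (r n) (Mm (φ j) n) (A (φ j) n * (A (φ j) n)ᵀ) := by
    intro n
    induction n using WellFoundedLT.induction with
    | ind n ih =>
      have ih' : ∀ᶠ j in atTop, ∀ m, m < n →
          PUniq (r m) (Mm (φ j) m) (A (φ j) m * (A (φ j) m)ᵀ) := by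
        rw [eventually_all]
        intro m
        by_cases hm : m < n
        · filter_upwards [ih m hm] with j hj _ using hj
        · exact Eventually.of_forall fun j h => absurd h hm
      refine core (hr n) (Gmat X Abar n) (hnd n) (fun j => Mm (φ j) n) (fun j => A (φ j) n)
        (Abar n) (fun j => ?_) (fun j => hA.1 _ n) (hfeas n)
        (((continuous_Mm X n).tendsto Abar).comp hlA') (hlA n) ?_
      · simp only [hMm, transpose_mul, transpose_transpose]
      · filter_upwards [ih', hge] with j hj hjk
        exact (hstep (φ j) hjk n (hprefix (φ j) hjk n hj)).1
  obtain ⟨j, hj, hjk⟩ := ((eventually_all.2 huniq).and hge).exists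
  refine ⟨φ j, hjk, ?_⟩
  have hall : ∀ k, φ j ≤ k → ∀ n, A k n * (A k n)ᵀ = A (φ j) n * (A (φ j) n)ᵀ := by
    intro k hk
    induction k, hk using Nat.le_induction with
    | base => intro n; rfl
    | succ k hk ih =>
      have hu : ∀ n, PUniq (r n) (Mm k n) (A k n * (A k n)ᵀ) := by
        intro n
        have : Mm k n = Mm (φ j) n := Mm_congr X _ _ n fun m _ => ih m
        rw [this, ih n]
        exact hj n
      intro n
      rw [← ih n]
      exact (hstep k (hjk.trans hk) n
        (hprefix k (hjk.trans hk) n fun m _ => hu m)).2 (hu n)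
  exact fun n k hk => hall k hk n
end
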